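/- arXiv:2502.06169 — 5 statements merged into one kernel-verified Lean document; each statement's English description precedes it below -/
import Mathlib

section
/- Let A = (a_ij) be a 3×3 generalized Cartan matrix whose principal 2×2 submatrix A₁₂ is of infinite type, i.e. a₁₂·a₂₁ ≥ 4. Then ℚ[ω₁,ω₂,ω₃] = P₁ + P₂ as ℚ-vector spaces; that is, every polynomial in ℚ[ω₁,ω₂,ω₃] is the sum of a polynomial fixed by σ₁ and a polynomial fixed by σ₂. -/
open MvPolynomial

/-- `A` is a (generalized) Cartan matrix. -/
def IsGCM {n : ℕ} (A : Matrix (Fin n) (Fin n) ℤ) : Prop :=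
  (∀ i, A i i = 2) ∧ (∀ i j, i ≠ j → A i j ≤ 0) ∧
    (∀ i j, i ≠ j → (A i j = 0 ↔ A j i = 0))

/-- The simple root `α_j = a₁ⱼω₁ + a₂ⱼω₂ + a₃ⱼω₃` viewed in `F[ω₁,ω₂,ω₃]`. -/
noncomputable def cartanAlpha (A : Matrix (Fin 3) (Fin 3) ℤ) (F : Type*) [Field F]
    (j : Fin 3) : MvPolynomial (Fin 3) F :=
  ∑ i : Fin 3, (C ((A i j : ℤ) : F)) * X i

/-- The simple reflection `σ_j`, the `F`-algebra endomorphism of `F[ω₁,ω₂,ω₃]`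
determined by `σ_j(ω_j) = ω_j − α_j` and `σ_j(ω_i) = ω_i` for `i ≠ j`. -/
noncomputable def cartanSigma (A : Matrix (Fin 3) (Fin 3) ℤ) (F : Type*) [Field F]
    (j : Fin 3) : MvPolynomial (Fin 3) F →ₐ[F] MvPolynomial (Fin 3) F :=
  aeval (fun i => if i = j then X j - cartanAlpha A F j else X i)

/-!
Some quadratic form `q` is invariant under both `σ₁` and `σ₂`, so `P₁ + P₂` is stable under
multiplication by `q`. Put `a = a₁₂` and `b = a₂₁`. By induction on `d`, multiplying a monomial of
degree `d - 2` in `ω₁, ω₂` by `q` shows that the monomials `m i = ω₁ⁱ ω₂ᵈ⁻ⁱ ω₃ᵏ` satisfy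
`a * m (i + 2) + a * b * m (i + 1) + b * m i ∈ P₁ + P₂`, where also `m 0 ∈ P₁` and `m d ∈ P₂`.
This tridiagonal system forces every `m i` into `P₁ + P₂` as soon as its leading principal minors
are nonzero. For `a * b ≥ 4` they are positive, since each is at least twice the preceding one.
-/

section Tridiagonal

variable {R M : Type*} [CommRing R] [AddCommGroup M] [Module R M]

/-- The continuants attached to a rank two Cartan matrix with `a₁₂ a₂₁ = t`, used to eliminate in a
tridiagonal system: `rankTwoContinuant t (n + 1)` is the determinant of the `n × n` tridiagonal
matrix with diagonal entries `t` in which opposite off-diagonal entries have product `t`.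
The index is shifted so that the recursion starts at `0, 1`. -/
def rankTwoContinuant (t : R) : ℕ → R
  | 0 => 0
  | 1 => 1
  | n + 2 => t * (rankTwoContinuant t (n + 1) - rankTwoContinuant t n)

theorem map_rankTwoContinuant {S : Type*} [CommRing S] (f : R →+* S) (t : R) (n : ℕ) :
    f (rankTwoContinuant t n) = rankTwoContinuant (f t) n := by
  induction n using Nat.twoStepInduction with
  | zero => exact map_zero f
  | one => exact map_one f
  | more n ih₀ ih₁ => simp only [rankTwoContinuant, map_mul, map_sub, ih₀, ih₁]

theorem two_mul_rankTwoContinuant_le_succ_and_pos [LinearOrder R] [IsStrictOrderedRing R] {t : R}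
    (ht : 4 ≤ t) (n : ℕ) :
    2 * rankTwoContinuant t n ≤ rankTwoContinuant t (n + 1) ∧
      0 < rankTwoContinuant t (n + 1) := by
  induction n with
  | zero => simp [rankTwoContinuant]
  | succ n ih =>
    obtain ⟨hdouble, hpos⟩ := ih
    have hdouble' : 2 * rankTwoContinuant t (n + 1) ≤ rankTwoContinuant t (n + 2) := by
      rw [rankTwoContinuant]
      nlinarith
    exact ⟨hdouble', by linarith⟩

theorem rankTwoContinuant_intCast_ne_zero {F : Type*} [CommRing F] [CharZero F] {t : ℤ}
    (ht : 4 ≤ t) (n : ℕ) : rankTwoContinuant (t : F) (n + 1) ≠ 0 := by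
  rw [← eq_intCast (Int.castRingHom F) t, ← map_rankTwoContinuant, eq_intCast, Int.cast_ne_zero]
  exact (two_mul_rankTwoContinuant_le_succ_and_pos ht n).2.ne'

variable {U : Submodule R M} {a b : R} {d : ℕ} {m : ℕ → ℕ → M}

theorem rankTwoContinuant_smul_add_mem (hleft : m 0 d ∈ U)
    (hrec : ∀ i j, i + j + 2 = d →
      a • m (i + 2) j + (a * b) • m (i + 1) (j + 1) + b • m i (j + 2) ∈ U)
    {i j : ℕ} (hij : i + j + 1 = d) :
    rankTwoContinuant (a * b) (i + 1) • m i (j + 1) +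
      (a * rankTwoContinuant (a * b) i) • m (i + 1) j ∈ U := by
  induction i generalizing j with
  | zero =>
    obtain rfl : j + 1 = d := by omega
    simpa [rankTwoContinuant] using hleft
  | succ i ih =>
    have heliminate := U.sub_mem
      (U.smul_mem (rankTwoContinuant (a * b) (i + 1)) (hrec i j (by omega)))
      (U.smul_mem b (ih (j := j + 1) (by omega)))
    convert heliminate using 1
    rw [rankTwoContinuant]
    module

theorem mem_of_tridiagonal (hunit : ∀ n, IsUnit (rankTwoContinuant (a * b) (n + 1)))
    (hleft : m 0 d ∈ U) (hright : m d 0 ∈ U)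
    (hrec : ∀ i j, i + j + 2 = d →
      a • m (i + 2) j + (a * b) • m (i + 1) (j + 1) + b • m i (j + 2) ∈ U)
    {i j : ℕ} (hij : i + j = d) : m i j ∈ U := by
  induction j generalizing i with
  | zero =>
    obtain rfl : i = d := hij
    exact hright
  | succ j ih =>
    have hnext : m (i + 1) j ∈ U := ih (by omega)
    have hsmul : rankTwoContinuant (a * b) (i + 1) • m i (j + 1) ∈ U :=
      (U.add_mem_iff_left (U.smul_mem _ hnext)).1
        (rankTwoContinuant_smul_add_mem hleft hrec hij)
    exact (U.smul_mem_iff_of_isUnit (hunit i)).1 hsmul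

end Tridiagonal

theorem mul_mem_toSubmodule_sup {R B : Type*} [CommSemiring R] [Semiring B] [Algebra R B]
    {S T : Subalgebra R B} {r x : B} (hrS : r ∈ S) (hrT : r ∈ T)
    (hx : x ∈ S.toSubmodule ⊔ T.toSubmodule) : r * x ∈ S.toSubmodule ⊔ T.toSubmodule := by
  obtain ⟨s, hs, t, ht, rfl⟩ := Submodule.mem_sup.1 hx
  rw [mul_add]
  exact Submodule.add_mem_sup (S.mul_mem hrS hs) (T.mul_mem hrT ht)

section Invariants

variable {A : Matrix (Fin 3) (Fin 3) ℤ} {F : Type*} [Field F]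

/-- The algebra `P_j` of polynomials fixed by the simple reflection `σ_j`. -/
noncomputable def cartanFixed (A : Matrix (Fin 3) (Fin 3) ℤ) (F : Type*) [Field F] (j : Fin 3) :
    Subalgebra F (MvPolynomial (Fin 3) F) :=
  AlgHom.equalizer (cartanSigma A F j) (AlgHom.id F _)

theorem mem_cartanFixed {j : Fin 3} {p : MvPolynomial (Fin 3) F} :
    p ∈ cartanFixed A F j ↔ cartanSigma A F j p = p :=
  Iff.rfl

theorem cartanSigma_X_self (j : Fin 3) :
    cartanSigma A F j (X j) = X j - cartanAlpha A F j := by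
  simp [cartanSigma]

theorem cartanSigma_X_of_ne {i j : Fin 3} (hij : i ≠ j) : cartanSigma A F j (X i) = X i := by
  simp [cartanSigma, hij]

/-- A quadratic form invariant under `σ₁` and `σ₂`. Up to a polynomial in the variables fixed by
`σ₁` it is `-a₁₂ ω₁ σ₁(ω₁)`, and up to a polynomial in the variables fixed by `σ₂` it is
`-a₂₁ ω₂ σ₂(ω₂)`. -/
noncomputable def cartanQuadric (A : Matrix (Fin 3) (Fin 3) ℤ) (F : Type*) [Field F] :
    MvPolynomial (Fin 3) F :=
  C (A 0 1 : F) * X 0 ^ 2 + C (A 0 1 : F) * C (A 1 0 : F) * X 0 * X 1 + C (A 1 0 : F) * X 1 ^ 2 +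
    C (A 0 1 : F) * C (A 2 0 : F) * X 0 * X 2 + C (A 1 0 : F) * C (A 2 1 : F) * X 1 * X 2

theorem cartanQuadric_mem_cartanFixed_zero (h₀ : A 0 0 = 2) :
    cartanQuadric A F ∈ cartanFixed A F 0 := by
  simp only [mem_cartanFixed, cartanQuadric, map_add, map_mul, map_pow, algHom_C, algebraMap_eq,
    cartanSigma_X_self, cartanSigma_X_of_ne (show (1 : Fin 3) ≠ 0 by decide),
    cartanSigma_X_of_ne (show (2 : Fin 3) ≠ 0 by decide), cartanAlpha, Fin.sum_univ_three, h₀,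
    Int.cast_ofNat, map_ofNat]
  ring

theorem cartanQuadric_mem_cartanFixed_one (h₁ : A 1 1 = 2) :
    cartanQuadric A F ∈ cartanFixed A F 1 := by
  simp only [mem_cartanFixed, cartanQuadric, map_add, map_mul, map_pow, algHom_C, algebraMap_eq,
    cartanSigma_X_self, cartanSigma_X_of_ne (show (0 : Fin 3) ≠ 1 by decide),
    cartanSigma_X_of_ne (show (2 : Fin 3) ≠ 1 by decide), cartanAlpha, Fin.sum_univ_three, h₁,
    Int.cast_ofNat, map_ofNat]
  ring

theorem X_pow_mul_X_pow_mul_X_pow_mem_cartanFixed_sup (h₀ : A 0 0 = 2) (h₁ : A 1 1 = 2)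
    (hcont : ∀ n, rankTwoContinuant (A 0 1 * A 1 0 : F) (n + 1) ≠ 0) (i j k : ℕ) :
    X 0 ^ i * X 1 ^ j * X 2 ^ k ∈
      (cartanFixed A F 0).toSubmodule ⊔ (cartanFixed A F 1).toSubmodule := by
  induction hd : i + j using Nat.strong_induction_on generalizing i j k with
  | _ d ih =>
    set U := (cartanFixed A F 0).toSubmodule ⊔ (cartanFixed A F 1).toSubmodule
    refine mem_of_tridiagonal (m := fun i j ↦ X 0 ^ i * X 1 ^ j * X 2 ^ k)
      (fun n ↦ (hcont n).isUnit) ?left ?right ?rec hd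
    case left =>
      exact Submodule.mem_sup_left (mem_cartanFixed.2 (by simp [cartanSigma_X_of_ne]))
    case right =>
      exact Submodule.mem_sup_right (mem_cartanFixed.2 (by simp [cartanSigma_X_of_ne]))
    case rec =>
      intro i j hij
      have hquadric : cartanQuadric A F * (X 0 ^ i * X 1 ^ j * X 2 ^ k) ∈ U :=
        mul_mem_toSubmodule_sup (cartanQuadric_mem_cartanFixed_zero h₀)
          (cartanQuadric_mem_cartanFixed_one h₁) (ih (i + j) (by omega) i j k rfl)
      have hlower₀ : X 0 ^ (i + 1) * X 1 ^ j * X 2 ^ (k + 1) ∈ U :=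
        ih (i + 1 + j) (by omega) (i + 1) j (k + 1) rfl
      have hlower₁ : X 0 ^ i * X 1 ^ (j + 1) * X 2 ^ (k + 1) ∈ U :=
        ih (i + (j + 1)) (by omega) i (j + 1) (k + 1) rfl
      convert U.sub_mem (U.sub_mem hquadric (U.smul_mem (A 0 1 * A 2 0 : F) hlower₀))
        (U.smul_mem (A 1 0 * A 2 1 : F) hlower₁) using 1
      simp only [cartanQuadric, smul_eq_C_mul, C_mul]
      ring

theorem cartanFixed_zero_sup_cartanFixed_one_eq_top (h₀ : A 0 0 = 2) (h₁ : A 1 1 = 2)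
    (hcont : ∀ n, rankTwoContinuant (A 0 1 * A 1 0 : F) (n + 1) ≠ 0) :
    (cartanFixed A F 0).toSubmodule ⊔ (cartanFixed A F 1).toSubmodule = ⊤ := by
  refine Submodule.eq_top_iff'.2 fun p ↦ ?_
  induction p using MvPolynomial.induction_on' with
  | monomial u c =>
    have hmonomial : monomial u c = c • (X 0 ^ u 0 * X 1 ^ u 1 * X 2 ^ u 2) := by
      rw [monomial_eq, smul_eq_C_mul, Finsupp.prod_fintype _ _ fun _ ↦ pow_zero _,
        Fin.prod_univ_three]
    rw [hmonomial]
    exact Submodule.smul_mem _ c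
      (X_pow_mul_X_pow_mul_X_pow_mem_cartanFixed_sup h₀ h₁ hcont (u 0) (u 1) (u 2))
  | add p q hp hq => exact Submodule.add_mem _ hp hq

end Invariants

theorem rational_P_eq_P1_add_P2_general {F : Type*} [Field F] [CharZero F]
    (A : Matrix (Fin 3) (Fin 3) ℤ) (h₀ : A 0 0 = 2) (h₁ : A 1 1 = 2)
    (hinf : 4 ≤ A 0 1 * A 1 0) (p : MvPolynomial (Fin 3) F) :
    ∃ p₁ p₂ : MvPolynomial (Fin 3) F,
      cartanSigma A F 0 p₁ = p₁ ∧ cartanSigma A F 1 p₂ = p₂ ∧ p = p₁ + p₂ := by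
  have hcont : ∀ n, rankTwoContinuant (A 0 1 * A 1 0 : F) (n + 1) ≠ 0 := fun n ↦ by
    exact_mod_cast rankTwoContinuant_intCast_ne_zero (F := F) hinf n
  have hp : p ∈ (cartanFixed A F 0).toSubmodule ⊔ (cartanFixed A F 1).toSubmodule :=
    cartanFixed_zero_sup_cartanFixed_one_eq_top h₀ h₁ hcont ▸ Submodule.mem_top
  obtain ⟨p₁, hp₁, p₂, hp₂, hsum⟩ := Submodule.mem_sup.1 hp
  exact ⟨p₁, p₂, hp₁, hp₂, hsum.symm⟩

/-- If `A` is a 3×3 generalized Cartan matrix with `a₁₂ a₂₁ ≥ 4`, then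
`ℚ[ω₁,ω₂,ω₃] = P₁ + P₂`: every polynomial is a sum of a `σ₁`-invariant polynomial
and a `σ₂`-invariant polynomial. -/
theorem rational_P_eq_P1_add_P2 (A : Matrix (Fin 3) (Fin 3) ℤ) (hA : IsGCM A)
    (hinf : 4 ≤ A 0 1 * A 1 0) :
    ∀ p : MvPolynomial (Fin 3) ℚ, ∃ p₁ p₂ : MvPolynomial (Fin 3) ℚ,
      cartanSigma A ℚ 0 p₁ = p₁ ∧ cartanSigma A ℚ 1 p₂ = p₂ ∧ p = p₁ + p₂ :=
  rational_P_eq_P1_add_P2_general A (hA.1 0) (hA.1 1) hinf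
end

section
/- Let p be any prime and let A = (a_ij) be a 3×3 generalized Cartan matrix with a₁₂·a₂₁ ≥ 4. Then in F_p[ω₁,ω₂,ω₃] (coefficients reduced mod p), the sum of the F_p-subalgebra generated by {ω₁(ω₁−α₁), ω₂, ω₃} and the F_p-subalgebra generated by {ω₁, ω₂(ω₂−α₂), ω₃} is a proper subset of F_p[ω₁,ω₂,ω₃]. -/
open MvPolynomial

/-! Modulo `ω₃` the two subalgebras become subalgebras of `F[x, y]` fixed by the reflections
`x ↦ -x - b y` and `y ↦ -y - a x`, where `b = a₂₁` and `a = a₁₂`. As `a` and `b` lie in the prime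
field, both reflections change the sign of `x ^ p y - x y ^ p`. Summing the values of a polynomial
over the points of the plane over the field with `q = p ^ 2` elements, with this weight, therefore
kills both subalgebras: a reflection pairs off the points, and the weight vanishes at its fixed
points. But the sum does not vanish on `x ^ (q - 1 - p) y ^ (q - 2)`.

The weight vanishes at the fixed points of a reflection unless that reflection is trivial, which
happens only for `p = 2` and, say, `b` even. In that case `x y ^ 3` is missing from the sum:
substitute `x ↦ ε` with `ε ^ 2 = 0`. The first subalgebra is sent to polynomials in `y` with
coefficients free of `ε`, the second to polynomials in `u = y ^ 2 + a ε y` over `F[ε]`, which have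
no term in `y ^ 3` because `u ^ 2 = y ^ 4`.
-/

/-- The Moore determinant of `(x, y)` with respect to the `p`-th power map, up to sign. In
characteristic `p` it changes sign under `x ↦ -x - b y` for every `b` in the prime field. -/
def mooreDet {R : Type*} [CommRing R] (p : ℕ) (x y : R) : R :=
  x ^ p * y - x * y ^ p

section MooreDet

variable {K : Type*} [CommRing K] (p : ℕ)

lemma mooreDet_swap (x y : K) : mooreDet p y x = -mooreDet p x y := by
  simp only [mooreDet]
  ring

variable [Fact p.Prime] [CharP K p]

lemma neg_sub_intCast_mul_pow_char (b : ℤ) (x y : K) :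
    (-x - b * y) ^ p = -x ^ p - b * y ^ p := by
  have h := map_sub (frobenius K p) (-x) (b * y)
  rwa [map_neg, map_mul, map_intCast] at h

lemma mooreDet_neg_sub_intCast_mul (b : ℤ) (x y : K) :
    mooreDet p (-x - b * y) y = -mooreDet p x y := by
  simp only [mooreDet, neg_sub_intCast_mul_pow_char]
  ring

lemma mooreDet_eq_zero_of_neg_sub_intCast_mul_eq_self [IsDomain K] {b : ℤ}
    (hb : ¬((p : ℤ) ∣ 2 ∧ (p : ℤ) ∣ b)) {x y : K} (hx : -x - b * y = x) :
    mooreDet p x y = 0 := by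
  have hxp : -x ^ p - b * y ^ p = x ^ p := by
    rw [← neg_sub_intCast_mul_pow_char, hx]
  have two_mul_eq : ((2 : ℤ) : K) * mooreDet p x y = 0 := by
    simp only [mooreDet, Int.cast_ofNat]
    linear_combination y ^ p * hx - y * hxp
  have b_mul_eq : (b : K) * mooreDet p x y = 0 := by
    simp only [mooreDet]
    linear_combination x * hxp - x ^ p * hx
  contrapose! hb
  rw [← CharP.intCast_eq_zero_iff K, ← CharP.intCast_eq_zero_iff K]
  exact ⟨(mul_eq_zero.mp two_mul_eq).resolve_right hb, (mul_eq_zero.mp b_mul_eq).resolve_right hb⟩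

lemma sum_mooreDet_mul_eq_zero [IsDomain K] [Fintype K] {L : Type*} [CommRing L] (ι : K →+* L)
    {b : ℤ} (hb : ¬((p : ℤ) ∣ 2 ∧ (p : ℤ) ∣ b)) (y : K) {g : K → L}
    (hg : ∀ x, g (-x - b * y) = g x) : ∑ x, ι (mooreDet p x y) * g x = 0 := by
  refine Finset.sum_involution (fun x _ ↦ -x - b * y) ?_ ?_ (fun _ _ ↦ Finset.mem_univ _) ?_
  · intro x _
    rw [mooreDet_neg_sub_intCast_mul, hg, map_neg]
    ring
  · intro x _ hne hx
    rw [mooreDet_eq_zero_of_neg_sub_intCast_mul_eq_self p hb hx, map_zero, zero_mul] at hne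
    exact hne rfl
  · intro x _
    ring

end MooreDet

section FiniteFieldSums

variable {K : Type*} [Field K] [Fintype K]

lemma sum_pow_card_sub_one : ∑ x : K, x ^ (Fintype.card K - 1) = -1 := by
  classical
  have hpos : Fintype.card K - 1 ≠ 0 := (Nat.sub_pos_of_lt Fintype.one_lt_card).ne'
  have pow_eq (x : K) : x ^ (Fintype.card K - 1) = 1 - if x = 0 then 1 else 0 := by
    split_ifs with hx
    · rw [hx, zero_pow hpos, sub_self]
    · rw [FiniteField.pow_card_sub_one_eq_one x hx, sub_zero]
  simp [pow_eq]

lemma sum_mooreDet_mul_pow_mul_pow {p m n : ℕ} (hp : 1 < p) (hm : m + p = Fintype.card K - 1)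
    (hn : n + 1 = Fintype.card K - 1) :
    ∑ x : K, ∑ y : K, mooreDet p x y * (x ^ m * y ^ n) = 1 := by
  have expand (x y : K) : mooreDet p x y * (x ^ m * y ^ n) =
      x ^ (Fintype.card K - 1) * y ^ (Fintype.card K - 1) - x ^ (m + 1) * y ^ (n + p) := by
    have hx : x ^ (Fintype.card K - 1) = x ^ m * x ^ p := by rw [← hm, pow_add]
    have hy : y ^ (Fintype.card K - 1) = y ^ n * y := by rw [← hn, pow_succ]
    rw [hx, hy, mooreDet]
    ring
  simp only [expand, Finset.sum_sub_distrib, ← Finset.mul_sum, ← Finset.sum_mul,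
    sum_pow_card_sub_one, FiniteField.sum_pow_lt_card_sub_one K (m + 1) (by lia)]
  ring

end FiniteFieldSums

section RankTwo

variable {R : Type*} [CommRing R]

/-- The subalgebra of `R[x₀, x₁]` generated by `xᵢ(xᵢ + b xⱼ)` and `xⱼ`, the image modulo `ω₃` of
the subalgebra attached to the simple root `αᵢ`. For `i ≠ j` the generators are fixed by the
reflection `xᵢ ↦ -xᵢ - b xⱼ`, `xⱼ ↦ xⱼ`. -/
noncomputable def reflectionSubalgebra (i j : Fin 2) (b : R) :
    Subalgebra R (MvPolynomial (Fin 2) R) :=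
  Algebra.adjoin R {X i * (X i + C b * X j), X j}

/-- The functional summing the values of a polynomial over the `K`-points of the plane, weighted by
`mooreDet`. The values lie in an `R`-algebra `L` that receives `K` through `ι`, so that `R` and `K`
need not be comparable. -/
noncomputable def mooreFunctional {K L : Type*} [CommRing K] [Fintype K] [CommRing L] [Algebra R L]
    (p : ℕ) (ι : K →+* L) : MvPolynomial (Fin 2) R →ₗ[R] L :=
  ∑ x, ∑ y, LinearMap.mulLeft R (ι (mooreDet p x y)) ∘ₗ (aeval ![ι x, ι y]).toLinearMap

section MooreFunctional

variable {K L : Type*} [CommRing K] [Fintype K] [CommRing L] [Algebra R L] (p : ℕ) (ι : K →+* L)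

lemma mooreFunctional_apply (f : MvPolynomial (Fin 2) R) :
    mooreFunctional p ι f = ∑ x, ∑ y, ι (mooreDet p x y) * aeval ![ι x, ι y] f := by
  simp [mooreFunctional]

lemma aeval_eq_of_mem_reflectionSubalgebra {i j : Fin 2} {b : R} {f : MvPolynomial (Fin 2) R}
    (hf : f ∈ reflectionSubalgebra i j b) {v w : Fin 2 → L}
    (hi : w i = -v i - algebraMap R L b * v j) (hj : w j = v j) : aeval w f = aeval v f := by
  refine AlgHom.adjoin_le_equalizer (aeval w) (aeval v) ?_ hf
  rintro g (rfl | rfl)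
  · simp only [map_mul, map_add, aeval_X, aeval_C, hi, hj]
    ring
  · simpa only [aeval_X] using hj

section Kernel

variable [Fact p.Prime] [CharP K p] [IsDomain K] {b : ℤ}

lemma reflectionSubalgebra_zero_one_le_ker_mooreFunctional
    (hb : ¬((p : ℤ) ∣ 2 ∧ (p : ℤ) ∣ b)) :
    Subalgebra.toSubmodule (reflectionSubalgebra 0 1 (b : R)) ≤
      LinearMap.ker (mooreFunctional p ι) := by
  intro f hf
  rw [LinearMap.mem_ker, mooreFunctional_apply, Finset.sum_comm]
  refine Finset.sum_eq_zero fun y _ ↦ sum_mooreDet_mul_eq_zero p ι hb y fun x ↦ ?_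
  exact aeval_eq_of_mem_reflectionSubalgebra hf (by simp) (by simp)

lemma reflectionSubalgebra_one_zero_le_ker_mooreFunctional
    (hb : ¬((p : ℤ) ∣ 2 ∧ (p : ℤ) ∣ b)) :
    Subalgebra.toSubmodule (reflectionSubalgebra 1 0 (b : R)) ≤
      LinearMap.ker (mooreFunctional p ι) := by
  intro f hf
  rw [LinearMap.mem_ker, mooreFunctional_apply]
  refine Finset.sum_eq_zero fun x _ ↦ ?_
  have sum_swap := sum_mooreDet_mul_eq_zero p ι hb x (g := fun y ↦ aeval ![ι x, ι y] f) fun y ↦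
    aeval_eq_of_mem_reflectionSubalgebra hf (by simp) (by simp)
  simpa only [mooreDet_swap p x, map_neg, neg_mul, Finset.sum_neg_distrib, neg_eq_zero]
    using sum_swap

end Kernel

end MooreFunctional

lemma mooreFunctional_X_pow_mul_X_pow {K L : Type*} [Field K] [Fintype K] [CommRing L] [Algebra R L]
    {p m n : ℕ} (ι : K →+* L) (hp : 1 < p) (hm : m + p = Fintype.card K - 1)
    (hn : n + 1 = Fintype.card K - 1) :
    mooreFunctional p ι (X 0 ^ m * X 1 ^ n : MvPolynomial (Fin 2) R) = 1 := by
  rw [mooreFunctional_apply, ← map_one ι, ← sum_mooreDet_mul_pow_mul_pow (K := K) hp hm hn]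
  simp

lemma reflectionSubalgebra_sup_ne_top_of_not_dvd (p : ℕ) [Fact p.Prime] [CharP R p] {a b : ℤ}
    (ha : ¬((p : ℤ) ∣ 2 ∧ (p : ℤ) ∣ a)) (hb : ¬((p : ℤ) ∣ 2 ∧ (p : ℤ) ∣ b)) :
    Subalgebra.toSubmodule (reflectionSubalgebra 0 1 (b : R)) ⊔
      Subalgebra.toSubmodule (reflectionSubalgebra 1 0 (a : R)) ≠ ⊤ := by
  have hp : 1 < p := (Fact.out : p.Prime).one_lt
  let _ : Algebra (ZMod p) R := ZMod.algebra R p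
  let _ : Fintype (GaloisField p 2) := Fintype.ofFinite _
  have hcard : Fintype.card (GaloisField p 2) = p ^ 2 := by
    rw [← Nat.card_eq_fintype_card, GaloisField.card p 2 two_ne_zero]
  have : Nontrivial R := CharP.nontrivial_of_char_ne_one hp.ne'
  let ι : GaloisField p 2 →+* TensorProduct (ZMod p) R (GaloisField p 2) :=
    (Algebra.TensorProduct.includeRight : _ →ₐ[ZMod p] _).toRingHom
  have le_ker := sup_le (reflectionSubalgebra_zero_one_le_ker_mooreFunctional (R := R) p ι hb)
    (reflectionSubalgebra_one_zero_le_ker_mooreFunctional p ι ha)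
  intro htop
  rw [htop, top_le_iff, LinearMap.ker_eq_top] at le_ker
  have two_mul_le : 2 * p ≤ p ^ 2 := by nlinarith
  have one_eq := mooreFunctional_X_pow_mul_X_pow (R := R) ι (m := p ^ 2 - 1 - p) (n := p ^ 2 - 2) hp
    (by lia) (by lia)
  rw [le_ker, LinearMap.zero_apply] at one_eq
  exact zero_ne_one one_eq

lemma coeff_three_X_sq_add_C_mul_X_pow (h2 : (2 : R) = 0) {c : R} (hc : c ^ 2 = 0) (n : ℕ) :
    ((Polynomial.X ^ 2 + Polynomial.C c * Polynomial.X) ^ n).coeff 3 = 0 := by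
  have sq_eq : (Polynomial.X ^ 2 + Polynomial.C c * Polynomial.X) ^ 2 = Polynomial.X ^ 4 := by
    have h2' : (2 : Polynomial R) = 0 := by rw [← map_ofNat Polynomial.C 2, h2, map_zero]
    have hc' : (Polynomial.C c) ^ 2 = 0 := by rw [← map_pow, hc, map_zero]
    linear_combination Polynomial.C c * Polynomial.X ^ 3 * h2' + Polynomial.X ^ 2 * hc'
  obtain ⟨k, rfl | rfl⟩ := n.even_or_odd'
  · rw [pow_mul, sq_eq, ← pow_mul, Polynomial.coeff_X_pow, if_neg (by lia)]
  · rw [pow_succ, pow_mul, sq_eq, ← pow_mul, mul_comm, Polynomial.coeff_mul_X_pow']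
    split_ifs with hk
    · obtain rfl : k = 0 := by lia
      simp
    · rfl

lemma coeff_three_eq_zero_of_mem_adjoin (h2 : (2 : R) = 0) {c : R} (hc : c ^ 2 = 0)
    {f : Polynomial R}
    (hf : f ∈ Algebra.adjoin R {Polynomial.X ^ 2 + Polynomial.C c * Polynomial.X}) :
    f.coeff 3 = 0 := by
  rw [Algebra.adjoin_singleton_eq_range_aeval] at hf
  obtain ⟨g, rfl⟩ := hf
  rw [AlgHom.toRingHom_eq_coe, RingHom.coe_coe, Polynomial.aeval_eq_sum_range,
    Polynomial.finsetSum_coeff]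
  refine Finset.sum_eq_zero fun n _ ↦ ?_
  rw [Polynomial.coeff_smul, coeff_three_X_sq_add_C_mul_X_pow h2 hc, smul_zero]

/-- The substitution `xᵢ ↦ ε`, `xⱼ ↦ X` for `j ≠ i`, with `ε ^ 2 = 0`: it keeps the part of a
polynomial of degree at most one in `xᵢ`. -/
noncomputable def dualSpecialization (i : Fin 2) :
    MvPolynomial (Fin 2) R →ₐ[R] Polynomial (DualNumber R) :=
  aeval fun k ↦ if k = i then Polynomial.C (DualNumber.eps : DualNumber R) else Polynomial.X

section DualSpecialization

variable {i j : Fin 2}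

lemma dualSpecialization_X_self : dualSpecialization i (X i : MvPolynomial (Fin 2) R) =
    Polynomial.C DualNumber.eps := by
  simp [dualSpecialization]

lemma dualSpecialization_X_of_ne (hij : i ≠ j) :
    dualSpecialization i (X j : MvPolynomial (Fin 2) R) = Polynomial.X := by
  simp [dualSpecialization, hij.symm]

lemma dualSpecialization_mem_range_mapAlgHom (hij : i ≠ j) {f : MvPolynomial (Fin 2) R}
    (hf : f ∈ reflectionSubalgebra i j 0) :
    dualSpecialization i f ∈ (Polynomial.mapAlgHom (Algebra.ofId R (DualNumber R))).range := by
  suffices reflectionSubalgebra i j 0 ≤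
      (Polynomial.mapAlgHom (Algebra.ofId R (DualNumber R))).range.comap (dualSpecialization i) from
    this hf
  refine Algebra.adjoin_le ?_
  rintro g (rfl | rfl)
  · exact ⟨0, by simp [dualSpecialization_X_self, ← Polynomial.C_mul]⟩
  · exact ⟨Polynomial.X, by simp [dualSpecialization_X_of_ne hij]⟩

lemma dualSpecialization_mem_adjoin (hij : i ≠ j) {a : R} {f : MvPolynomial (Fin 2) R}
    (hf : f ∈ reflectionSubalgebra j i a) :
    dualSpecialization i f ∈ Algebra.adjoin (DualNumber R)
      {Polynomial.X ^ 2 + Polynomial.C (a • DualNumber.eps) * Polynomial.X} := by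
  set S := Algebra.adjoin (DualNumber R)
    {Polynomial.X ^ 2 + Polynomial.C (a • DualNumber.eps : DualNumber R) * Polynomial.X}
  suffices reflectionSubalgebra j i a ≤ (S.restrictScalars R).comap (dualSpecialization i) from
    this hf
  refine Algebra.adjoin_le ?_
  rintro g (rfl | rfl)
  · refine Algebra.subset_adjoin ?_
    rw [Set.mem_singleton_iff]
    simp only [RingHom.coe_coe, map_mul, map_add, dualSpecialization_X_of_ne hij,
      dualSpecialization_X_self, ← algebraMap_eq, AlgHom.commutes, Polynomial.algebraMap_apply,
      Algebra.smul_def]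
    ring
  · rw [SetLike.mem_coe, Subalgebra.mem_comap, dualSpecialization_X_self]
    exact S.algebraMap_mem DualNumber.eps

lemma X_mul_X_pow_three_notMem_sup [Nontrivial R] (h2 : (2 : R) = 0) (hij : i ≠ j) (a : R) :
    X i * X j ^ 3 ∉ Subalgebra.toSubmodule (reflectionSubalgebra i j (0 : R)) ⊔
      Subalgebra.toSubmodule (reflectionSubalgebra j i a) := by
  intro hmem
  obtain ⟨f, hf, g, hg, hfg⟩ := Submodule.mem_sup.mp hmem
  obtain ⟨r, hr⟩ := dualSpecialization_mem_range_mapAlgHom hij hf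
  have h2' : (2 : DualNumber R) = 0 := by
    rw [← map_ofNat (algebraMap R (DualNumber R)) 2, h2, map_zero]
  have hε : (a • DualNumber.eps : DualNumber R) ^ 2 = 0 := by
    rw [smul_pow, DualNumber.eps_pow_two, smul_zero]
  have hg3 := coeff_three_eq_zero_of_mem_adjoin h2' hε (dualSpecialization_mem_adjoin hij hg)
  have hcoeff := congrArg (fun q ↦ (dualSpecialization i q).coeff 3) hfg
  have eps_eq : algebraMap R (DualNumber R) (r.coeff 3) = DualNumber.eps := by
    simpa [← hr, hg3, dualSpecialization_X_self, dualSpecialization_X_of_ne hij] using hcoeff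
  simpa [TrivSqZeroExt.algebraMap_eq_inl] using congrArg TrivSqZeroExt.snd eps_eq

end DualSpecialization

theorem reflectionSubalgebra_sup_ne_top (p : ℕ) [Fact p.Prime] [CharP R p] (a b : ℤ) :
    Subalgebra.toSubmodule (reflectionSubalgebra 0 1 (b : R)) ⊔
      Subalgebra.toSubmodule (reflectionSubalgebra 1 0 (a : R)) ≠ ⊤ := by
  have : Nontrivial R := CharP.nontrivial_of_char_ne_one (Fact.out : p.Prime).ne_one
  have two_eq_zero (h : (p : ℤ) ∣ 2) : (2 : R) = 0 := by
    exact_mod_cast (CharP.intCast_eq_zero_iff R p 2).mpr h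
  by_cases hb : (p : ℤ) ∣ 2 ∧ (p : ℤ) ∣ b
  · rw [(CharP.intCast_eq_zero_iff R p b).mpr hb.2]
    intro htop
    exact X_mul_X_pow_three_notMem_sup (two_eq_zero hb.1) zero_ne_one (a : R)
      (htop ▸ Submodule.mem_top)
  by_cases ha : (p : ℤ) ∣ 2 ∧ (p : ℤ) ∣ a
  · rw [(CharP.intCast_eq_zero_iff R p a).mpr ha.2, sup_comm]
    intro htop
    exact X_mul_X_pow_three_notMem_sup (two_eq_zero ha.1) one_ne_zero (b : R)
      (htop ▸ Submodule.mem_top)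
  exact reflectionSubalgebra_sup_ne_top_of_not_dvd p ha hb

/-- Reduction modulo the third variable, `R[ω₁, ω₂, ω₃] → R[ω₁, ω₂]`: it forgets all of the Cartan
matrix but its upper left 2×2 block. -/
noncomputable def restrictRankTwo : MvPolynomial (Fin 3) R →ₐ[R] MvPolynomial (Fin 2) R :=
  aeval ![X 0, X 1, 0]

lemma restrictRankTwo_surjective : Function.Surjective (restrictRankTwo (R := R)) := by
  rw [← AlgHom.range_eq_top, ← top_le_iff, ← adjoin_range_X, Algebra.adjoin_le_iff]
  rintro _ ⟨k, rfl⟩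
  fin_cases k
  · exact ⟨X 0, by simp [restrictRankTwo]⟩
  · exact ⟨X 1, by simp [restrictRankTwo]⟩

end RankTwo

section Cartan

variable {F : Type*} [Field F] {A : Matrix (Fin 3) (Fin 3) ℤ}

lemma restrictRankTwo_cartanAlpha (j : Fin 3) : restrictRankTwo (cartanAlpha A F j) =
    C (A 0 j : F) * X 0 + C (A 1 j : F) * X 1 := by
  simp [cartanAlpha, restrictRankTwo, Fin.sum_univ_three]

lemma restrictRankTwo_mem_reflectionSubalgebra_zero_one (h00 : A 0 0 = 2)
    {q : MvPolynomial (Fin 3) F}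
    (hq : q ∈ Algebra.adjoin F {X 0 * (X 0 - cartanAlpha A F 0), X 1, X 2}) :
    restrictRankTwo q ∈ reflectionSubalgebra 0 1 (A 1 0 : F) := by
  suffices Algebra.adjoin F {X 0 * (X 0 - cartanAlpha A F 0), X 1, X 2} ≤
      (reflectionSubalgebra 0 1 (A 1 0 : F)).comap restrictRankTwo from this hq
  refine Algebra.adjoin_le ?_
  rintro g (rfl | rfl | rfl)
  · have image_eq : restrictRankTwo (X 0 * (X 0 - cartanAlpha A F 0)) =
        -(X 0 * (X 0 + C (A 1 0 : F) * X 1)) := by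
      rw [map_mul, map_sub, restrictRankTwo_cartanAlpha, h00]
      simp only [restrictRankTwo, aeval_X, Matrix.cons_val, map_intCast, Int.cast_ofNat, map_ofNat]
      ring
    rw [SetLike.mem_coe, Subalgebra.mem_comap, image_eq]
    exact neg_mem (Algebra.subset_adjoin (Set.mem_insert _ _))
  · exact Algebra.subset_adjoin (by simp [restrictRankTwo])
  · simp [restrictRankTwo]

lemma restrictRankTwo_mem_reflectionSubalgebra_one_zero (h11 : A 1 1 = 2)
    {q : MvPolynomial (Fin 3) F}
    (hq : q ∈ Algebra.adjoin F {X 0, X 1 * (X 1 - cartanAlpha A F 1), X 2}) :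
    restrictRankTwo q ∈ reflectionSubalgebra 1 0 (A 0 1 : F) := by
  suffices Algebra.adjoin F {X 0, X 1 * (X 1 - cartanAlpha A F 1), X 2} ≤
      (reflectionSubalgebra 1 0 (A 0 1 : F)).comap restrictRankTwo from this hq
  refine Algebra.adjoin_le ?_
  rintro g (rfl | rfl | rfl)
  · exact Algebra.subset_adjoin (by simp [restrictRankTwo])
  · have image_eq : restrictRankTwo (X 1 * (X 1 - cartanAlpha A F 1)) =
        -(X 1 * (X 1 + C (A 0 1 : F) * X 0)) := by
      rw [map_mul, map_sub, restrictRankTwo_cartanAlpha, h11]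
      simp only [restrictRankTwo, aeval_X, Matrix.cons_val, map_intCast, Int.cast_ofNat, map_ofNat]
      ring
    rw [SetLike.mem_coe, Subalgebra.mem_comap, image_eq]
    exact neg_mem (Algebra.subset_adjoin (Set.mem_insert _ _))
  · simp [restrictRankTwo]

end Cartan

theorem modp_P_ne_P1_add_P2_general (p : ℕ) [Fact p.Prime] (F : Type*) [Field F] [CharP F p]
    (A : Matrix (Fin 3) (Fin 3) ℤ) (h00 : A 0 0 = 2) (h11 : A 1 1 = 2) :
    ¬ (∀ q : MvPolynomial (Fin 3) F,
        ∃ q₁ ∈ Algebra.adjoin F {X 0 * (X 0 - cartanAlpha A F 0), X 1, X 2},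
          ∃ q₂ ∈ Algebra.adjoin F {X 0, X 1 * (X 1 - cartanAlpha A F 1), X 2},
          q = q₁ + q₂) := by
  intro H
  refine reflectionSubalgebra_sup_ne_top (R := F) p (A 0 1) (A 1 0)
    (Submodule.eq_top_iff'.mpr fun f ↦ ?_)
  obtain ⟨q, rfl⟩ := restrictRankTwo_surjective f
  obtain ⟨q₁, hq₁, q₂, hq₂, rfl⟩ := H q
  rw [map_add]
  exact Submodule.add_mem_sup (restrictRankTwo_mem_reflectionSubalgebra_zero_one h00 hq₁)
    (restrictRankTwo_mem_reflectionSubalgebra_one_zero h11 hq₂)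

/-- Let `p` be a prime and `A` a 3×3 generalized Cartan matrix with `a₁₂ a₂₁ ≥ 4`.
In `𝔽_p[ω₁,ω₂,ω₃]`, the sum of the subalgebra generated by
`{ω₁(ω₁−α₁), ω₂, ω₃}` and the subalgebra generated by `{ω₁, ω₂(ω₂−α₂), ω₃}` is a
proper subset of `𝔽_p[ω₁,ω₂,ω₃]`. -/
theorem modp_P_ne_P1_add_P2 (p : ℕ) [Fact p.Prime]
    (A : Matrix (Fin 3) (Fin 3) ℤ) (hA : IsGCM A)
    (hinf : 4 ≤ A 0 1 * A 1 0) :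
    ¬ (∀ q : MvPolynomial (Fin 3) (ZMod p),
        ∃ q₁ ∈ Algebra.adjoin (ZMod p)
            {X 0 * (X 0 - cartanAlpha A (ZMod p) 0), X 1, X 2},
          ∃ q₂ ∈ Algebra.adjoin (ZMod p)
            {X 0, X 1 * (X 1 - cartanAlpha A (ZMod p) 1), X 2},
          q = q₁ + q₂) := by
  exact modp_P_ne_P1_add_P2_general p (ZMod p) A (hA.1 0) (hA.1 1)
end

section
/- Let A = (a_ij) be a 3×3 generalized Cartan matrix with a₁₂·a₂₁ ≥ 4, and let P₁₂ be the subalgebra of ℚ[ω₁,ω₂,ω₃] of polynomials fixed by both σ₁ and σ₂. Then for every n ≥ 0 the homogeneous component of (polynomial) degree n of P₁₂ has ℚ-dimension equal to ⌊n/2⌋ + 1, i.e. the Hilbert series of P₁₂ is 1/((1−t)(1−t²)) in polynomial degree (equivalently 1/((1−t²)(1−t⁴)) when each ω_i is given cohomological degree 2). -/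
open MvPolynomial

/-- The subspace of `σ_j`-invariant polynomials. -/
noncomputable def fixedSubmodule (A : Matrix (Fin 3) (Fin 3) ℤ) (F : Type*) [Field F]
    (j : Fin 3) : Submodule F (MvPolynomial (Fin 3) F) :=
  LinearMap.ker ((cartanSigma A F j).toLinearMap - LinearMap.id)

/-!
Evaluate polynomials at vectors of a space with coordinates `ω₁, ω₂, ω₃`. The reflections `σ₁, σ₂`
fix `ω₃`, hence act on the plane `ω₃ = 0`, and because `a₁₂ a₂₁ ≥ 4` the orbit of the line through
`(1, 0, 0)` in this plane is infinite. A homogeneous invariant vanishing at `(1, 0, 0)` vanishes on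
that orbit, hence on the whole plane, and is therefore `ω₃` times an invariant of one degree less.
This bounds the invariants of degree `n + 1` modulo `ω₃` by one dimension. The value at `(1, 0, 0)`
is zero in odd degree, as `σ₁` maps `(1, 0, 0)` to its negative, whereas in even degree the powers
of a quadratic invariant attain a nonzero value.
-/

theorem finrank_map_add_finrank_inf_ker {K V W : Type*} [DivisionRing K] [AddCommGroup V]
    [Module K V] [AddCommGroup W] [Module K W] (p : Submodule K V) [FiniteDimensional K p]
    (f : V →ₗ[K] W) :
    Module.finrank K (p.map f) + Module.finrank K ↥(p ⊓ LinearMap.ker f) = Module.finrank K p := by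
  have hker : Module.finrank K (LinearMap.ker (f.domRestrict p)) =
      Module.finrank K ↥(p ⊓ LinearMap.ker f) := by
    rw [LinearMap.ker_domRestrict, (Submodule.equivMapOfInjective p.subtype
      p.subtype_injective _).finrank_eq, Submodule.map_comap_subtype]
  rw [← LinearMap.range_domRestrict, ← hker, LinearMap.finrank_range_add_finrank_ker]

section Polynomial

variable {σ R : Type*}

theorem eval_smul_of_isHomogeneous [CommSemiring R] {n : ℕ} {f : MvPolynomial σ R}
    (hf : f.IsHomogeneous n) (c : R) (v : σ → R) : eval (c • v) f = c ^ n * eval v f := by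
  rw [eval_eq, eval_eq, Finset.mul_sum]
  refine Finset.sum_congr rfl fun d hd => ?_
  have hdeg : ∑ i ∈ d.support, d i = n := (hf.degree_eq_sum_deg_support hd).symm
  simp only [Pi.smul_apply, smul_eq_mul, mul_pow, Finset.prod_mul_distrib,
    Finset.prod_pow_eq_pow_sum, hdeg]
  ring

theorem isHomogeneous_X_mul_iff [CommSemiring R] {n : ℕ} {i : σ} {f : MvPolynomial σ R} :
    (X i * f).IsHomogeneous (n + 1) ↔ f.IsHomogeneous n := by
  refine ⟨fun h d hd => ?_, fun h => add_comm 1 n ▸ (isHomogeneous_X R i).mul h⟩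
  have hweight := @h (Finsupp.single i 1 + d) (by rwa [coeff_X_mul])
  rw [map_add, Finsupp.weight_single] at hweight
  simp only [Pi.one_apply, smul_eq_mul, mul_one] at hweight
  omega

variable [CommRing R]

theorem X_dvd_sub_aeval_update_zero [DecidableEq σ] (i : σ) (f : MvPolynomial σ R) :
    X i ∣ f - aeval (Function.update X i 0) f := by
  rw [← Ideal.mem_span_singleton, ← Ideal.Quotient.mk_eq_mk_iff_sub_mem]
  let π := Ideal.Quotient.mkₐ R (Ideal.span {(X i : MvPolynomial σ R)})
  have hπ : π (X i) = 0 := Ideal.Quotient.eq_zero_iff_mem.2 (Ideal.mem_span_singleton_self _)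
  have hcomp : π = π.comp (aeval (Function.update X i 0)) := by
    refine algHom_ext fun j => ?_
    rcases eq_or_ne j i with rfl | hj
    · simp [hπ]
    · simp [hj]
  exact DFunLike.congr_fun hcomp f

theorem X_dvd_of_eval_eq_zero [IsDomain R] [Infinite R] {i : σ} {f : MvPolynomial σ R}
    (h : ∀ v : σ → R, v i = 0 → eval v f = 0) : X i ∣ f := by
  classical
  have hzero : aeval (Function.update X i 0) f = (0 : MvPolynomial σ R) := by
    refine MvPolynomial.funext fun v => ?_
    rw [map_zero, aeval_eq_bind₁, ← h (Function.update v i 0) (by simp)]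
    refine (eval₂Hom_bind₁ _ _ _ _).trans (congrArg (eval · f) ?_)
    ext j
    rcases eq_or_ne j i with rfl | hj
    · simp
    · simp [hj]
  have hdvd := X_dvd_sub_aeval_update_zero i f
  rwa [hzero, sub_zero] at hdvd

theorem eval_add_smul_eq_zero_of_infinite [IsDomain R] {f : MvPolynomial σ R} {u w : σ → R}
    (h : {t : R | eval (w + t • u) f = 0}.Infinite) (t : R) : eval (w + t • u) f = 0 := by
  let g : Polynomial R := aeval (fun i => Polynomial.C (w i) + Polynomial.C (u i) * Polynomial.X) f
  have hg (t : R) : g.eval t = eval (w + t • u) f := by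
    have hcomp : (Polynomial.aeval t).comp
        (aeval fun i => Polynomial.C (w i) + Polynomial.C (u i) * Polynomial.X) =
          aeval (R := R) (w + t • u) :=
      algHom_ext fun i => by simp [mul_comm t]
    simpa [g] using DFunLike.congr_fun hcomp f
  have hg_zero : g = 0 :=
    g.eq_zero_of_infinite_isRoot (by simpa only [Polynomial.IsRoot, hg] using h)
  rw [← hg, hg_zero, Polynomial.eval_zero]

theorem eval_smul_add_smul_eq_zero_of_infinite {F : Type*} [Field F] {n : ℕ}
    {f : MvPolynomial σ F} (hf : f.IsHomogeneous n) {u w : σ → F}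
    (h : {t : F | eval (w + t • u) f = 0}.Infinite) (s t : F) : eval (s • u + t • w) f = 0 := by
  have : Infinite F := Set.infinite_univ_iff.1 (h.mono (Set.subset_univ _))
  refine eval_add_smul_eq_zero_of_infinite
    ((Set.finite_singleton 0).infinite_compl.mono fun r hr => ?_) t
  have hscale : s • u + r • w = r • (w + (s / r) • u) := by
    rw [smul_add, smul_smul, mul_div_cancel₀ s hr, add_comm]
  rw [Set.mem_ofPred_eq, hscale, eval_smul_of_isHomogeneous hf,
    eval_add_smul_eq_zero_of_infinite h, mul_zero]

end Polynomial

section Slope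

/-- A line in the plane `ω₃ = 0` has slope `r` if it contains `(r, -a₁₂, 0)`. With `c = a₁₂ a₂₁`,
these are the slopes of the line through `σ₂(1, 0, 0) = (1, -a₁₂, 0)` and of its images under the
powers of `σ₂σ₁`. -/
def orbitSlope {K : Type*} [Field K] (c : K) : ℕ → K
  | 0 => 1
  | k + 1 => 1 + (c - 1 - orbitSlope c k)⁻¹

variable {K : Type*} [Field K] [LinearOrder K] [IsStrictOrderedRing K] {c : K}

theorem orbitSlope_lt_two (hc : 4 ≤ c) (k : ℕ) : orbitSlope c k < 2 := by
  induction k with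
  | zero => exact one_lt_two
  | succ k ih =>
    have hinv : (c - 1 - orbitSlope c k)⁻¹ < 1 := inv_lt_one_of_one_lt₀ (by linarith)
    rw [orbitSlope]
    linarith

theorem sub_orbitSlope_pos (hc : 4 ≤ c) (k : ℕ) : 0 < c - 1 - orbitSlope c k := by
  linarith [orbitSlope_lt_two hc k]

theorem strictMono_orbitSlope (hc : 4 ≤ c) : StrictMono (orbitSlope c) := by
  refine strictMono_nat_of_lt_succ fun k => ?_
  induction k with
  | zero => exact lt_add_of_pos_right 1 (inv_pos.2 (sub_orbitSlope_pos hc 0))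
  | succ k ih =>
    rw [orbitSlope, orbitSlope]
    gcongr
    exact sub_orbitSlope_pos hc _

end Slope

section Invariants

variable {A : Matrix (Fin 3) (Fin 3) ℤ} {F : Type*} [Field F]

theorem mem_fixedSubmodule {j : Fin 3} {f : MvPolynomial (Fin 3) F} :
    f ∈ fixedSubmodule A F j ↔ cartanSigma A F j f = f := by
  simp [fixedSubmodule, sub_eq_zero]

theorem eval_update_of_mem_fixedSubmodule {j : Fin 3} {f : MvPolynomial (Fin 3) F}
    (hf : f ∈ fixedSubmodule A F j) (v : Fin 3 → F) :
    eval (Function.update v j (v j - ∑ i, (A i j : F) * v i)) f = eval v f := by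
  conv_rhs => rw [← mem_fixedSubmodule.1 hf, cartanSigma, aeval_eq_bind₁]
  refine ((eval₂Hom_bind₁ _ _ _ _).trans (congrArg (eval · f) ?_)).symm
  ext i
  rcases eq_or_ne i j with rfl | hij
  · simp [cartanAlpha]
  · simp [hij]

theorem eval_reflect_zero (h0 : A 0 0 = 2) {f : MvPolynomial (Fin 3) F}
    (hf : f ∈ fixedSubmodule A F 0) (x y : F) :
    eval ![-x - A 1 0 * y, y, 0] f = eval ![x, y, 0] f := by
  rw [← eval_update_of_mem_fixedSubmodule hf]
  refine congrArg (eval · f) ?_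
  ext i
  fin_cases i <;> simp [Fin.sum_univ_three, h0, two_mul, add_assoc, add_left_comm, sub_eq_add_neg]

theorem eval_reflect_one (h1 : A 1 1 = 2) {f : MvPolynomial (Fin 3) F}
    (hf : f ∈ fixedSubmodule A F 1) (x y : F) :
    eval ![x, -y - A 0 1 * x, 0] f = eval ![x, y, 0] f := by
  rw [← eval_update_of_mem_fixedSubmodule hf]
  refine congrArg (eval · f) ?_
  ext i
  fin_cases i <;> simp [Fin.sum_univ_three, h1, two_mul, add_assoc, add_left_comm, sub_eq_add_neg]

variable (A F) in
/-- The homogeneous component of degree `n` of the algebra `P₁₂` of common invariants of `σ₁` and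
`σ₂`. -/
noncomputable def invariantComponent (n : ℕ) : Submodule F (MvPolynomial (Fin 3) F) :=
  homogeneousSubmodule (Fin 3) F n ⊓ fixedSubmodule A F 0 ⊓ fixedSubmodule A F 1

theorem mem_invariantComponent {n : ℕ} {f : MvPolynomial (Fin 3) F} :
    f ∈ invariantComponent A F n ↔
      f.IsHomogeneous n ∧ f ∈ fixedSubmodule A F 0 ∧ f ∈ fixedSubmodule A F 1 := by
  simp only [invariantComponent, Submodule.mem_inf, mem_homogeneousSubmodule, and_assoc]

instance finiteDimensional_invariantComponent (n : ℕ) :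
    FiniteDimensional F (invariantComponent A F n) :=
  have : FiniteDimensional F (homogeneousSubmodule (Fin 3) F n) :=
    Module.Finite.iff_fg.2 (homogeneousSubmodule_fg _ _ n)
  Submodule.finiteDimensional_of_le (inf_le_left.trans inf_le_left)

theorem finrank_invariantComponent_zero : Module.finrank F (invariantComponent A F 0) = 1 := by
  have hspan : invariantComponent A F 0 = Submodule.span F {1} := by
    rw [← Submodule.one_eq_span, invariantComponent, homogeneousSubmodule_zero, inf_assoc,
      inf_eq_left, Submodule.one_eq_span, Submodule.span_singleton_le_iff_mem]
    simp [mem_fixedSubmodule]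
  rw [hspan, finrank_span_singleton one_ne_zero]

theorem X_two_mul_mem_invariantComponent {n : ℕ} {g : MvPolynomial (Fin 3) F} :
    X 2 * g ∈ invariantComponent A F (n + 1) ↔ g ∈ invariantComponent A F n := by
  have hfix {j : Fin 3} (hj : 2 ≠ j) :
      X 2 * g ∈ fixedSubmodule A F j ↔ g ∈ fixedSubmodule A F j := by
    rw [mem_fixedSubmodule, mem_fixedSubmodule, map_mul, cartanSigma_X_of_ne hj,
      mul_right_inj' (X_ne_zero 2)]
  rw [mem_invariantComponent, mem_invariantComponent, isHomogeneous_X_mul_iff,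
    hfix (by decide), hfix (by decide)]

variable (F) in
/-- Evaluation at `(1, 0, 0)`, that is, at the simple coroot dual to `ω₁`, as a linear form. -/
noncomputable def evalCoroot : MvPolynomial (Fin 3) F →ₗ[F] F :=
  (aeval ![1, 0, 0]).toLinearMap

theorem evalCoroot_apply (f : MvPolynomial (Fin 3) F) : evalCoroot F f = eval ![1, 0, 0] f :=
  DFunLike.congr_fun (coe_aeval_eq_eval ![1, 0, 0]) f

section CharZero

variable [CharZero F]

theorem eval_orbitSlope_eq_zero (h0 : A 0 0 = 2) (h1 : A 1 1 = 2) (hinf : 4 ≤ A 0 1 * A 1 0) {n : ℕ}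
    {f : MvPolynomial (Fin 3) F} (hf : f ∈ invariantComponent A F n) (hv : evalCoroot F f = 0)
    (k : ℕ) : eval ![((orbitSlope (A 0 1 * A 1 0 : ℚ) k : ℚ) : F), -A 0 1, 0] f = 0 := by
  obtain ⟨hhom, hfix0, hfix1⟩ := mem_invariantComponent.1 hf
  induction k with
  | zero =>
    rw [evalCoroot_apply, ← eval_reflect_one h1 hfix1] at hv
    simpa [orbitSlope] using hv
  | succ k ih =>
    have hpos := sub_orbitSlope_pos (c := (A 0 1 * A 1 0 : ℚ)) (by exact_mod_cast hinf) k
    rw [orbitSlope]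
    set r := orbitSlope (A 0 1 * A 1 0 : ℚ) k
    have hne : (A 0 1 * A 1 0 - 1 - r : F) ≠ 0 := by exact_mod_cast hpos.ne'
    have hreflect : (A 0 1 * A 1 0 - 1 - r : F) •
        ![((1 + (A 0 1 * A 1 0 - 1 - r)⁻¹ : ℚ) : F), -A 0 1, 0] =
          ![-(r : F) - A 1 0 * -A 0 1, -(-A 0 1) - A 0 1 * (-r - A 1 0 * -A 0 1), 0] := by
      rw [Matrix.smul_vec3, smul_eq_mul, smul_eq_mul, smul_zero]
      congrm ![?_, ?_, 0]
      · push_cast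
        field_simp
        ring
      · ring
    have hscale := eval_smul_of_isHomogeneous hhom (A 0 1 * A 1 0 - 1 - r : F)
      ![((1 + (A 0 1 * A 1 0 - 1 - r)⁻¹ : ℚ) : F), -A 0 1, 0]
    rw [hreflect, eval_reflect_one h1 hfix1, eval_reflect_zero h0 hfix0, ih] at hscale
    exact (mul_eq_zero.1 hscale.symm).resolve_left (pow_ne_zero n hne)

theorem X_two_dvd_of_evalCoroot_eq_zero (h0 : A 0 0 = 2) (h1 : A 1 1 = 2)
    (hinf : 4 ≤ A 0 1 * A 1 0) {n : ℕ} {f : MvPolynomial (Fin 3) F}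
    (hf : f ∈ invariantComponent A F n) (hv : evalCoroot F f = 0) : X 2 ∣ f := by
  have hA01 : (A 0 1 : F) ≠ 0 :=
    Int.cast_ne_zero.2 (left_ne_zero_of_mul (zero_lt_four.trans_le hinf).ne')
  have hinj : Function.Injective fun k => ((orbitSlope (A 0 1 * A 1 0 : ℚ) k : ℚ) : F) :=
    Rat.cast_injective.comp (strictMono_orbitSlope (by exact_mod_cast hinf)).injective
  have hroots : {t : F | eval (![0, -(A 0 1 : F), 0] + t • ![1, 0, 0]) f = 0}.Infinite := by
    refine (Set.infinite_range_of_injective hinj).mono ?_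
    rintro _ ⟨k, rfl⟩
    simpa using eval_orbitSlope_eq_zero h0 h1 hinf hf hv k
  refine X_dvd_of_eval_eq_zero fun v hv2 => ?_
  have hhom := (mem_invariantComponent.1 hf).1
  rw [← eval_smul_add_smul_eq_zero_of_infinite hhom hroots (v 0) (-v 1 / A 0 1)]
  refine congrArg (eval · f) ?_
  ext i
  fin_cases i <;> simp [hv2, hA01]

theorem invariantComponent_succ_inf_ker (h0 : A 0 0 = 2) (h1 : A 1 1 = 2)
    (hinf : 4 ≤ A 0 1 * A 1 0) (n : ℕ) :
    invariantComponent A F (n + 1) ⊓ LinearMap.ker (evalCoroot F) =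
      (invariantComponent A F n).map (LinearMap.mulLeft F (X 2)) := by
  ext f
  constructor
  · rintro ⟨hf, hv⟩
    obtain ⟨g, rfl⟩ := X_two_dvd_of_evalCoroot_eq_zero h0 h1 hinf hf hv
    exact ⟨g, X_two_mul_mem_invariantComponent.1 hf, rfl⟩
  · rintro ⟨g, hg, rfl⟩
    exact ⟨X_two_mul_mem_invariantComponent.2 hg, by simp [evalCoroot_apply]⟩

theorem finrank_invariantComponent_succ (h0 : A 0 0 = 2) (h1 : A 1 1 = 2)
    (hinf : 4 ≤ A 0 1 * A 1 0) (n : ℕ) :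
    Module.finrank F (invariantComponent A F (n + 1)) =
      Module.finrank F ((invariantComponent A F (n + 1)).map (evalCoroot F)) +
        Module.finrank F (invariantComponent A F n) := by
  have hX : Function.Injective (LinearMap.mulLeft F (X 2 : MvPolynomial (Fin 3) F)) :=
    mul_right_injective₀ (X_ne_zero 2)
  rw [← finrank_map_add_finrank_inf_ker _ (evalCoroot F),
    invariantComponent_succ_inf_ker h0 h1 hinf,
    (Submodule.equivMapOfInjective _ hX (invariantComponent A F n)).finrank_eq]

theorem map_evalCoroot_of_odd (h0 : A 0 0 = 2) {n : ℕ} (hn : Odd n) :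
    (invariantComponent A F n).map (evalCoroot F) = ⊥ := by
  rw [← LinearMap.le_ker_iff_map]
  intro f hf
  obtain ⟨hhom, hfix0, -⟩ := mem_invariantComponent.1 hf
  have hneg : eval ((-1 : F) • ![1, 0, 0]) f = eval ![1, 0, 0] f := by
    simpa using eval_reflect_zero h0 hfix0 1 0
  rw [eval_smul_of_isHomogeneous hhom, hn.neg_one_pow, neg_one_mul, neg_eq_self] at hneg
  rwa [LinearMap.mem_ker, evalCoroot_apply]

end CharZero

variable (A F) in
/-- The quadratic invariant of `σ₁` and `σ₂`: on the plane `ω₃ = 0` it is the symmetrized Cartan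
form `a₁₂ω₁² + a₁₂a₂₁ω₁ω₂ + a₂₁ω₂²`, and the terms in `ω₃` correct it to an invariant on the whole
space. -/
noncomputable def quadraticInvariant : MvPolynomial (Fin 3) F :=
  C (A 0 1 : F) * (X 0 * X 0) + C (A 0 1 * A 1 0 : F) * (X 0 * X 1) +
    C (A 1 0 : F) * (X 1 * X 1) + C (A 0 1 * A 2 0 : F) * (X 0 * X 2) +
    C (A 1 0 * A 2 1 : F) * (X 1 * X 2)

theorem quadraticInvariant_mem (h0 : A 0 0 = 2) (h1 : A 1 1 = 2) :
    quadraticInvariant A F ∈ invariantComponent A F 2 := by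
  rw [mem_invariantComponent, mem_fixedSubmodule, mem_fixedSubmodule]
  refine ⟨?_, ?_, ?_⟩
  · have hterm (c : F) (i j : Fin 3) : (C c * (X i * X j)).IsHomogeneous 2 :=
      ((isHomogeneous_X F i).mul (isHomogeneous_X F j)).C_mul c
    exact ((((hterm _ _ _).add (hterm _ _ _)).add (hterm _ _ _)).add (hterm _ _ _)).add
      (hterm _ _ _)
  · have h10 : (1 : Fin 3) ≠ 0 := by decide
    have h20 : (2 : Fin 3) ≠ 0 := by decide
    simp only [quadraticInvariant, map_add, map_mul, algHom_C, algebraMap_eq, cartanSigma_X_self,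
      cartanSigma_X_of_ne h10, cartanSigma_X_of_ne h20, cartanAlpha, Fin.sum_univ_three, h0,
      Int.cast_ofNat, map_ofNat]
    ring
  · have h01 : (0 : Fin 3) ≠ 1 := by decide
    have h21 : (2 : Fin 3) ≠ 1 := by decide
    simp only [quadraticInvariant, map_add, map_mul, algHom_C, algebraMap_eq, cartanSigma_X_self,
      cartanSigma_X_of_ne h01, cartanSigma_X_of_ne h21, cartanAlpha, Fin.sum_univ_three, h1,
      Int.cast_ofNat, map_ofNat]
    ring

theorem pow_mem_invariantComponent {m : ℕ} {f : MvPolynomial (Fin 3) F}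
    (hf : f ∈ invariantComponent A F m) (k : ℕ) : f ^ k ∈ invariantComponent A F (m * k) := by
  simp only [mem_invariantComponent, mem_fixedSubmodule] at hf ⊢
  obtain ⟨hhom, hfix0, hfix1⟩ := hf
  exact ⟨hhom.pow k, by rw [map_pow, hfix0], by rw [map_pow, hfix1]⟩

theorem map_evalCoroot_of_even (h0 : A 0 0 = 2) (h1 : A 1 1 = 2) (hA01 : (A 0 1 : F) ≠ 0) {n : ℕ}
    (hn : Even n) : (invariantComponent A F n).map (evalCoroot F) = ⊤ := by
  obtain ⟨k, rfl⟩ := hn.two_dvd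
  have hvalue : evalCoroot F (quadraticInvariant A F ^ k) = (A 0 1 : F) ^ k := by
    simp [evalCoroot_apply, quadraticInvariant]
  refine (eq_bot_or_eq_top _).resolve_left fun hbot => pow_ne_zero k hA01 ?_
  rw [← hvalue, ← Submodule.mem_bot F, ← hbot]
  exact Submodule.mem_map_of_mem (pow_mem_invariantComponent (quadraticInvariant_mem h0 h1) k)

end Invariants

theorem hilbert_series_P12_general {F : Type*} [Field F] [CharZero F]
    (A : Matrix (Fin 3) (Fin 3) ℤ) (h0 : A 0 0 = 2) (h1 : A 1 1 = 2)
    (hinf : 4 ≤ A 0 1 * A 1 0) (n : ℕ) :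
    Module.finrank F
      ↥(homogeneousSubmodule (Fin 3) F n ⊓ fixedSubmodule A F 0 ⊓ fixedSubmodule A F 1) =
      n / 2 + 1 := by
  change Module.finrank F (invariantComponent A F n) = n / 2 + 1
  have hA01 : (A 0 1 : F) ≠ 0 :=
    Int.cast_ne_zero.2 (left_ne_zero_of_mul (zero_lt_four.trans_le hinf).ne')
  induction n with
  | zero => exact finrank_invariantComponent_zero
  | succ n ih =>
    rw [finrank_invariantComponent_succ h0 h1 hinf, ih]
    rcases Nat.even_or_odd (n + 1) with hn | hn
    · rw [map_evalCoroot_of_even h0 h1 hA01 hn, finrank_top, Module.finrank_self]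
      have := hn.two_dvd
      omega
    · rw [map_evalCoroot_of_odd h0 hn, finrank_bot]
      have := hn.not_two_dvd_nat
      omega

/-- If `A` is a 3×3 generalized Cartan matrix with `a₁₂ a₂₁ ≥ 4`, the homogeneous
component of polynomial degree `n` of the invariant subalgebra
`P₁₂ = Fix σ₁ ∩ Fix σ₂` of `ℚ[ω₁,ω₂,ω₃]` has dimension `⌊n/2⌋ + 1`, i.e. the
Hilbert series of `P₁₂` is `1/((1−t)(1−t²))` in polynomial degree. -/
theorem hilbert_series_P12 (A : Matrix (Fin 3) (Fin 3) ℤ) (hA : IsGCM A)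
    (hinf : 4 ≤ A 0 1 * A 1 0) (n : ℕ) :
    Module.finrank ℚ
      ↥(homogeneousSubmodule (Fin 3) ℚ n ⊓ fixedSubmodule A ℚ 0 ⊓ fixedSubmodule A ℚ 1) =
      n / 2 + 1 := by
  exact hilbert_series_P12_general A (hA.1 0) (hA.1 1) hinf n
end

section
/- Let A = (a_ij) be a 3×3 generalized Cartan matrix with a₁₃·a₃₁ ≥ 4 (so that the principal submatrix A₁₃ is of infinite type). Then in ℚ[ω₁,ω₂,ω₃] one has P₁ + (P₁₂ + P₃) = ℚ[ω₁,ω₂,ω₃] and P₁ ∩ (P₁₂ + P₃) = P₁₂ + P₁₃, where sums are sums of ℚ-subspaces; consequently the inclusion P₁ ⊆ ℚ[ω₁,ω₂,ω₃] induces an isomorphism of ℚ-vector spaces P₁/(P₁₂ + P₁₃) ≅ ℚ[ω₁,ω₂,ω₃]/(P₁₂ + P₃). -/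
/-!
Everything rests on `P₁ + P₃ = F[ω₁,ω₂,ω₃]`; the rest is the modular law. With `a = a₁₃` and
`b = a₃₁`, the quadric `Q = a ω₁² + ab ω₁ω₃ + b ω₃² + ω₂ (a a₂₁ ω₁ + b a₂₃ ω₃)` is invariant under
both `σ₁` and `σ₃`, so `P₁ + P₃` is closed under multiplication by `Q` and by `ω₂`. By induction on
`n`, the monomials `w k = ω₁ᵏ ω₃ⁿ⁻ᵏ` therefore satisfy `a w (k+2) + ab w (k+1) + b w k = 0` modulo
`P₁ + P₃`, and the end terms vanish there since `ω₃ⁿ ∈ P₁` and `ω₁ⁿ ∈ P₃`. Because `ab ≥ 4` the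
characteristic roots are real of equal sign, and such a recurrence has only the trivial solution
with zero boundary values.
-/

open MvPolynomial

section Recurrence

variable {K V : Type*} [Field K] [LinearOrder K] [IsStrictOrderedRing K]
  [AddCommGroup V] [Module K V]

theorem eq_zero_of_normalized_recurrence {ρ : K} (hρ : ρ ≤ 1) {w : ℕ → V} {n : ℕ}
    (h0 : w 0 = 0) (hn : w n = 0)
    (hw : ∀ k, k + 2 ≤ n → w (k + 2) = (2 : K) • w (k + 1) - ρ • w k) {k : ℕ} (hk : k ≤ n) :
    w k = 0 := by
  have multiple (k : ℕ) (hk : k + 1 ≤ n) :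
      ∃ u v : K, 0 ≤ u ∧ u < v ∧ w k = u • w 1 ∧ w (k + 1) = v • w 1 := by
    induction k with
    | zero => exact ⟨0, 1, le_rfl, one_pos, by simp [h0], by simp⟩
    | succ k ih =>
      obtain ⟨u, v, hu, huv, hwu, hwv⟩ := ih (by lia)
      refine ⟨v, 2 * v - ρ * u, hu.trans huv.le, ?_, hwv, ?_⟩
      · linarith [mul_le_of_le_one_left hu hρ]
      · rw [hw k hk, hwu, hwv]
        module
  rcases n with _ | n
  · rwa [Nat.le_zero.mp hk]
  have h1 : w 1 = 0 := by
    obtain ⟨u, v, hu, huv, -, hwv⟩ := multiple n le_rfl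
    exact (smul_eq_zero.mp (hwv.symm.trans hn)).resolve_left (hu.trans_lt huv).ne'
  rcases k with _ | k
  · exact h0
  · obtain ⟨u, v, -, -, -, hwv⟩ := multiple k hk
    rw [hwv, h1, smul_zero]

theorem eq_zero_of_recurrence {p q r : K} (hp : p ≠ 0) (hq : q ≠ 0) (hdisc : 4 * p * r ≤ q ^ 2)
    {w : ℕ → V} {n : ℕ} (h0 : w 0 = 0) (hn : w n = 0)
    (hw : ∀ k, k + 2 ≤ n → p • w (k + 2) + q • w (k + 1) + r • w k = 0) {k : ℕ} (hk : k ≤ n) :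
    w k = 0 := by
  -- Dividing `w k` by the `k`-th power of the mean `-q / (2 * p)` of the characteristic roots makes
  -- their sum equal to `2`.
  obtain ⟨s, hs, hsq⟩ : ∃ s : K, s ≠ 0 ∧ q = -(2 * p) / s :=
    ⟨-(2 * p) / q, by simp [hp, hq], by field_simp⟩
  have hρ : 4 * p * r / q ^ 2 ≤ 1 := (div_le_one (sq_pos_of_ne_zero hq)).mpr hdisc
  have hscaled : s ^ k • w k = 0 := by
    refine eq_zero_of_normalized_recurrence (w := fun k ↦ s ^ k • w k) hρ (by simp [h0])
      (by simp [hn]) (fun k hk ↦ ?_) hk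
    have hsolved : w (k + 2) = -(q / p) • w (k + 1) - (r / p) • w k := by
      linear_combination (norm := (match_scalars <;> field_simp <;> ring)) p⁻¹ • hw k hk
    simp only [hsolved, hsq]
    match_scalars <;> field_simp <;> ring
  exact (smul_eq_zero.mp hscaled).resolve_left (pow_ne_zero k hs)

end Recurrence

theorem pow_mul_pow_mem_of_quadric_mul_mem {K R : Type*} [Field K] [LinearOrder K]
    [IsStrictOrderedRing K] [CommRing R] [Algebra K R] {T : Submodule K R} {x y z : R}
    {p q r s t : K} (hp : p ≠ 0) (hq : q ≠ 0) (hdisc : 4 * p * r ≤ q ^ 2)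
    (hx : ∀ n, x ^ n ∈ T) (hy : ∀ n, y ^ n ∈ T) (hz : ∀ f ∈ T, z * f ∈ T)
    (hQ : ∀ f ∈ T, (p • x ^ 2 + q • (x * y) + r • y ^ 2 + z * (s • x + t • y)) * f ∈ T)
    (i j : ℕ) : x ^ i * y ^ j ∈ T := by
  induction hn : i + j using Nat.strong_induction_on generalizing i j with
  | _ n ih =>
  obtain rfl : j = n - i := by lia
  rw [← Submodule.Quotient.mk_eq_zero]
  refine eq_zero_of_recurrence (w := fun k ↦ T.mkQ (x ^ k * y ^ (n - k))) hp hq hdisc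
    (by simpa using hy n) (by simpa using hx n) (fun k hk ↦ ?_) (by lia : i ≤ n)
  obtain ⟨m, rfl⟩ : ∃ m, n = k + m + 2 := ⟨n - k - 2, by lia⟩
  have hlower : z * (s • (x ^ (k + 1) * y ^ m) + t • (x ^ k * y ^ (m + 1))) ∈ T :=
    hz _ (T.add_mem (T.smul_mem s (ih _ (by lia) _ _ rfl)) (T.smul_mem t (ih _ (by lia) _ _ rfl)))
  have hquadric := T.sub_mem (hQ _ (ih (k + m) (by lia) k m rfl)) hlower
  rw [← map_smul, ← map_smul, ← map_smul, ← map_add, ← map_add, Submodule.mkQ_apply,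
    Submodule.Quotient.mk_eq_zero, show k + m + 2 - (k + 2) = m by lia,
    show k + m + 2 - (k + 1) = m + 1 by lia, show k + m + 2 - k = m + 2 by lia]
  convert hquadric using 1
  simp only [Algebra.smul_def]
  ring

theorem eq_top_of_X_zero_pow_mul_X_two_pow_mem {R : Type*} [CommSemiring R]
    {T : Submodule R (MvPolynomial (Fin 3) R)} (hX : ∀ f ∈ T, X 1 * f ∈ T)
    (hT : ∀ i j, X 0 ^ i * X 2 ^ j ∈ T) : T = ⊤ := by
  have hpow (n : ℕ) {f : MvPolynomial (Fin 3) R} (hf : f ∈ T) : X 1 ^ n * f ∈ T := by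
    induction n with
    | zero => simpa using hf
    | succ n ih => simpa only [pow_succ', mul_assoc] using hX _ ih
  rw [← top_le_iff, ← (basisMonomials (Fin 3) R).span_eq, Submodule.span_le]
  rintro _ ⟨d, rfl⟩
  have hd : basisMonomials (Fin 3) R d = X 1 ^ d 1 * (X 0 ^ d 0 * X 2 ^ d 2) := by
    simp only [coe_basisMonomials]
    rw [monomial_eq, Finsupp.prod_fintype _ _ (by simp), Fin.prod_univ_three, C_1]
    ring
  rw [SetLike.mem_coe, hd]
  exact hpow (d 1) (hT (d 0) (d 2))

theorem mul_mem_sup_of_mem {R S : Type*} [CommSemiring R] [Semiring S] [Algebra R S]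
    {B₁ B₂ : Subalgebra R S} {c f : S} (h₁ : c ∈ B₁) (h₂ : c ∈ B₂)
    (hf : f ∈ Subalgebra.toSubmodule B₁ ⊔ Subalgebra.toSubmodule B₂) :
    c * f ∈ Subalgebra.toSubmodule B₁ ⊔ Subalgebra.toSubmodule B₂ := by
  obtain ⟨g, hg, h, hh, rfl⟩ := Submodule.mem_sup.mp hf
  rw [mul_add]
  exact Submodule.add_mem_sup (B₁.mul_mem h₁ hg) (B₂.mul_mem h₂ hh)

section Reflection

variable {A : Matrix (Fin 3) (Fin 3) ℤ} {F : Type*} [Field F]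

variable (A F) in
/-- The invariant subalgebra `P_{j}` of the reflection `σ_j`, whose underlying subspace is
`fixedSubmodule A F j`; it makes the multiplicative closure of the invariants available. -/
noncomputable def fixedSubalgebra (j : Fin 3) : Subalgebra F (MvPolynomial (Fin 3) F) :=
  AlgHom.equalizer (cartanSigma A F j) (AlgHom.id F _)

theorem toSubmodule_fixedSubalgebra (j : Fin 3) :
    Subalgebra.toSubmodule (fixedSubalgebra A F j) = fixedSubmodule A F j := by
  ext f
  simp [fixedSubalgebra, fixedSubmodule, sub_eq_zero]

theorem X_mem_fixedSubalgebra {i j : Fin 3} (hij : i ≠ j) : X i ∈ fixedSubalgebra A F j := by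
  simp [fixedSubalgebra, cartanSigma, hij]

theorem cartanSigma_cartanAlpha {j : Fin 3} (hj : A j j = 2) :
    cartanSigma A F j (cartanAlpha A F j) = -cartanAlpha A F j := by
  have hX (i : Fin 3) :
      cartanSigma A F j (X i) = X i - if i = j then cartanAlpha A F j else 0 := by
    by_cases hij : i = j <;> simp [cartanSigma, hij]
  calc cartanSigma A F j (cartanAlpha A F j)
      = ∑ i, C ((A i j : ℤ) : F) * cartanSigma A F j (X i) := by
        rw [cartanAlpha]
        simp
    _ = cartanAlpha A F j - C ((A j j : ℤ) : F) * cartanAlpha A F j := by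
        simp only [hX, mul_sub, Finset.sum_sub_distrib, mul_ite, mul_zero, Finset.sum_ite_eq',
          Finset.mem_univ, if_true]
        rfl
    _ = -cartanAlpha A F j := by
        rw [hj, Int.cast_ofNat, map_ofNat]
        ring

/-- Up to sign, this polynomial is the norm `ω_j σ_j(ω_j)`. -/
theorem X_mul_cartanAlpha_sub_X_mem_fixedSubalgebra {j : Fin 3} (hj : A j j = 2) :
    X j * (cartanAlpha A F j - X j) ∈ fixedSubalgebra A F j := by
  change cartanSigma A F j _ = _
  rw [map_mul, map_sub, cartanSigma_X_self, cartanSigma_cartanAlpha hj]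
  simp only [AlgHom.id_apply]
  ring

variable (A F) in
/-- The quadratic form invariant under both `σ₁` and `σ₃`. Its Gram matrix in `ω₁, ω₃` is half the
symmetrization `!![2, a₁₃; a₃₁, 2] * diag(a₁₃, a₃₁)`; the multiples of `ω₂` compensate for the
`ω₂`-components of `α₁` and `α₃`. -/
noncomputable def invariantQuadric : MvPolynomial (Fin 3) F :=
  A 0 2 • X 0 ^ 2 + (A 0 2 * A 2 0) • (X 0 * X 2) + A 2 0 • X 2 ^ 2 +
    X 1 * ((A 0 2 * A 1 0) • X 0 + (A 2 0 * A 1 2) • X 2)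

theorem invariantQuadric_mem_fixedSubalgebra_zero (h00 : A 0 0 = 2) :
    invariantQuadric A F ∈ fixedSubalgebra A F 0 := by
  have hnorm : invariantQuadric A F = A 0 2 • (X 0 * (cartanAlpha A F 0 - X 0)) +
      A 2 0 • (X 2 * (X 2 + A 1 2 • X 1)) := by
    simp only [invariantQuadric, zsmul_eq_mul, Int.cast_mul, cartanAlpha, map_intCast,
      Fin.sum_univ_three, h00, Int.cast_ofNat]
    ring
  have h1 : X 1 ∈ fixedSubalgebra A F 0 := X_mem_fixedSubalgebra (by decide)
  have h2 : X 2 ∈ fixedSubalgebra A F 0 := X_mem_fixedSubalgebra (by decide)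
  rw [hnorm]
  exact add_mem (zsmul_mem (X_mul_cartanAlpha_sub_X_mem_fixedSubalgebra h00) _)
    (zsmul_mem (mul_mem h2 (add_mem h2 (zsmul_mem h1 _))) _)

theorem invariantQuadric_mem_fixedSubalgebra_two (h22 : A 2 2 = 2) :
    invariantQuadric A F ∈ fixedSubalgebra A F 2 := by
  have hnorm : invariantQuadric A F = A 2 0 • (X 2 * (cartanAlpha A F 2 - X 2)) +
      A 0 2 • (X 0 * (X 0 + A 1 0 • X 1)) := by
    simp only [invariantQuadric, zsmul_eq_mul, Int.cast_mul, cartanAlpha, map_intCast,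
      Fin.sum_univ_three, h22, Int.cast_ofNat]
    ring
  have h0 : X 0 ∈ fixedSubalgebra A F 2 := X_mem_fixedSubalgebra (by decide)
  have h1 : X 1 ∈ fixedSubalgebra A F 2 := X_mem_fixedSubalgebra (by decide)
  rw [hnorm]
  exact add_mem (zsmul_mem (X_mul_cartanAlpha_sub_X_mem_fixedSubalgebra h22) _)
    (zsmul_mem (mul_mem h0 (add_mem h0 (zsmul_mem h1 _))) _)

theorem fixedSubmodule_zero_sup_two_eq_top [CharZero F] (h00 : A 0 0 = 2) (h22 : A 2 2 = 2)
    (hinf : 4 ≤ A 0 2 * A 2 0) : fixedSubmodule A F 0 ⊔ fixedSubmodule A F 2 = ⊤ := by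
  simp only [← toSubmodule_fixedSubalgebra]
  set T := Subalgebra.toSubmodule (fixedSubalgebra A F 0) ⊔
    Subalgebra.toSubmodule (fixedSubalgebra A F 2)
  have hX1 (f) (hf : f ∈ T) : X 1 * f ∈ T :=
    mul_mem_sup_of_mem (X_mem_fixedSubalgebra (by decide)) (X_mem_fixedSubalgebra (by decide)) hf
  have hQ (f) (hf : f ∈ T) : invariantQuadric A F * f ∈ T :=
    mul_mem_sup_of_mem (invariantQuadric_mem_fixedSubalgebra_zero h00)
      (invariantQuadric_mem_fixedSubalgebra_two h22) hf
  have hX0 (n : ℕ) : X 0 ^ n ∈ T :=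
    Submodule.mem_sup_right (pow_mem (X_mem_fixedSubalgebra (by decide)) n)
  have hX2 (n : ℕ) : X 2 ^ n ∈ T :=
    Submodule.mem_sup_left (pow_mem (X_mem_fixedSubalgebra (by decide)) n)
  have hprod : (4 : ℚ) ≤ A 0 2 * A 2 0 := mod_cast hinf
  have hprod_ne : (A 0 2 * A 2 0 : ℚ) ≠ 0 := by linarith
  refine eq_top_of_X_zero_pow_mul_X_two_pow_mem hX1 fun i j ↦ ?_
  exact pow_mul_pow_mem_of_quadric_mul_mem (T := T.restrictScalars ℚ) (z := X 1)
    (p := A 0 2) (q := A 0 2 * A 2 0) (r := A 2 0) (s := A 0 2 * A 1 0) (t := A 2 0 * A 1 2)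
    (left_ne_zero_of_mul hprod_ne) hprod_ne (by nlinarith) hX0 hX2 hX1
    (by simpa [invariantQuadric, Algebra.smul_def] using hQ) i j

end Reflection

theorem surjective_mkQ_comp_subtype_iff {R M : Type*} [Ring R] [AddCommGroup M] [Module R M]
    {P N : Submodule R M} : Function.Surjective (N.mkQ ∘ₗ P.subtype) ↔ P ⊔ N = ⊤ := by
  rw [← LinearMap.range_eq_top, LinearMap.range_comp, Submodule.range_subtype,
    Submodule.map_mkQ_eq_top, sup_comm]

theorem P1_mod_P12_P13_iso_general {F : Type*} [Field F] [CharZero F]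
    (A : Matrix (Fin 3) (Fin 3) ℤ) (h00 : A 0 0 = 2) (h22 : A 2 2 = 2)
    (hinf : 4 ≤ A 0 2 * A 2 0) :
    (fixedSubmodule A F 0 ⊔
        ((fixedSubmodule A F 0 ⊓ fixedSubmodule A F 1) ⊔ fixedSubmodule A F 2) = ⊤) ∧
    (fixedSubmodule A F 0 ⊓
        ((fixedSubmodule A F 0 ⊓ fixedSubmodule A F 1) ⊔ fixedSubmodule A F 2) =
      (fixedSubmodule A F 0 ⊓ fixedSubmodule A F 1) ⊔
        (fixedSubmodule A F 0 ⊓ fixedSubmodule A F 2)) ∧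
    (Function.Surjective
        (((fixedSubmodule A F 0 ⊓ fixedSubmodule A F 1) ⊔ fixedSubmodule A F 2).mkQ ∘ₗ
          (fixedSubmodule A F 0).subtype)) ∧
    (LinearMap.ker
        (((fixedSubmodule A F 0 ⊓ fixedSubmodule A F 1) ⊔ fixedSubmodule A F 2).mkQ ∘ₗ
          (fixedSubmodule A F 0).subtype) =
      Submodule.comap (fixedSubmodule A F 0).subtype
        ((fixedSubmodule A F 0 ⊓ fixedSubmodule A F 1) ⊔
          (fixedSubmodule A F 0 ⊓ fixedSubmodule A F 2))) := by
  set P₁ := fixedSubmodule A F 0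
  set P₂ := fixedSubmodule A F 1
  set P₃ := fixedSubmodule A F 2
  have hsup : P₁ ⊔ (P₁ ⊓ P₂ ⊔ P₃) = ⊤ := by
    rw [← sup_assoc, sup_inf_self]
    exact fixedSubmodule_zero_sup_two_eq_top h00 h22 hinf
  have hinter : P₁ ⊓ (P₁ ⊓ P₂ ⊔ P₃) = P₁ ⊓ P₂ ⊔ P₁ ⊓ P₃ := by
    rw [inf_comm, sup_inf_assoc_of_le _ inf_le_left, inf_comm P₃]
  refine ⟨hsup, hinter, surjective_mkQ_comp_subtype_iff.mpr hsup, ?_⟩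
  rw [← hinter, LinearMap.ker_comp, Submodule.ker_mkQ, Submodule.comap_inf,
    Submodule.comap_subtype_self, top_inf_eq]

/-- Let `A` be a 3×3 generalized Cartan matrix with `a₁₃ a₃₁ ≥ 4`.  Then
`P₁ + (P₁₂ + P₃) = ℚ[ω₁,ω₂,ω₃]`, `P₁ ∩ (P₁₂ + P₃) = P₁₂ + P₁₃`, and the inclusion
`P₁ ⊆ ℚ[ω₁,ω₂,ω₃]` induces an isomorphism `P₁/(P₁₂+P₁₃) ≅ ℚ[ω₁,ω₂,ω₃]/(P₁₂+P₃)`: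
the composite `P₁ → ℚ[ω₁,ω₂,ω₃] → ℚ[ω₁,ω₂,ω₃]/(P₁₂+P₃)` is surjective with kernel
`P₁₂ + P₁₃`. -/
theorem P1_mod_P12_P13_iso (A : Matrix (Fin 3) (Fin 3) ℤ) (hA : IsGCM A)
    (hinf : 4 ≤ A 0 2 * A 2 0) :
    (fixedSubmodule A ℚ 0 ⊔
        ((fixedSubmodule A ℚ 0 ⊓ fixedSubmodule A ℚ 1) ⊔ fixedSubmodule A ℚ 2) = ⊤) ∧
    (fixedSubmodule A ℚ 0 ⊓
        ((fixedSubmodule A ℚ 0 ⊓ fixedSubmodule A ℚ 1) ⊔ fixedSubmodule A ℚ 2) =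
      (fixedSubmodule A ℚ 0 ⊓ fixedSubmodule A ℚ 1) ⊔
        (fixedSubmodule A ℚ 0 ⊓ fixedSubmodule A ℚ 2)) ∧
    (Function.Surjective
        (((fixedSubmodule A ℚ 0 ⊓ fixedSubmodule A ℚ 1) ⊔ fixedSubmodule A ℚ 2).mkQ ∘ₗ
          (fixedSubmodule A ℚ 0).subtype)) ∧
    (LinearMap.ker
        (((fixedSubmodule A ℚ 0 ⊓ fixedSubmodule A ℚ 1) ⊔ fixedSubmodule A ℚ 2).mkQ ∘ₗ
          (fixedSubmodule A ℚ 0).subtype) =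
      Submodule.comap (fixedSubmodule A ℚ 0).subtype
        ((fixedSubmodule A ℚ 0 ⊓ fixedSubmodule A ℚ 1) ⊔
          (fixedSubmodule A ℚ 0 ⊓ fixedSubmodule A ℚ 2))) :=
  P1_mod_P12_P13_iso_general A (hA.1 0) (hA.1 2) hinf
end

section
/- Let A be the 3×3 generalized Cartan matrix with rows (2, −1, −3), (−3, 2, −1), (−2, −4, 2). For j = 1,2,3 let A_j be the 3×3 matrix obtained from A by replacing every entry outside the j-th column by 0, and let M_j = I₃ − A_j, with entries reduced modulo 3. Then each M_j is invertible over F₃ and the subgroup of GL(3, F₃) generated by M₁, M₂, M₃ is all of GL(3, F₃). -/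
open Matrix

/-- The Cartan matrix with rows `(2,−1,−3)`, `(−3,2,−1)`, `(−2,−4,2)`. -/
def Amat : Matrix (Fin 3) (Fin 3) ℤ := !![2, -1, -3; -3, 2, -1; -2, -4, 2]

/-- `M_j = I₃ − A_j` over `𝔽₃`, where `A_j` is obtained from `A` by replacing all
entries outside the `j`-th column by `0`: the matrix of the simple reflection
`σ_j` in the basis `(ω₁, ω₂, ω₃)`. -/
def reflMatrix (j : Fin 3) : Matrix (Fin 3) (Fin 3) (ZMod 3) :=
  fun i k => (if i = k then 1 else 0) - (if k = j then ((Amat i k : ℤ) : ZMod 3) else 0)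

/-!
Index rows and columns from `0`. Modulo `3` the entries `a₁₀` and `a₀₂` of `A` vanish while `a₀₁`
and `a₂₀` do not. If `a_ij = 0 ≠ a_ji`, then `(σ_i σ_j)²` is a nontrivial transvection; multiplying
such a square with a conjugate of itself or of its inverse by `diag(1, 1, -1)`, itself a conjugate
of `σ₁`, isolates elementary transvections in the positions `(0, 1)` and `(2, 0)`, and
`diag(1, 1, -1) σ₂` is one in position `(1, 2)`. Commutators propagate elementary transvections
along paths of positions, and the cycle `0 → 1 → 2 → 0` is strongly connected, so the group contains
`SL₃(𝔽₃)`. Since reflections have determinant `-1` and `𝔽₃ˣ = {1, -1}`, it is all of `GL₃(𝔽₃)`.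
-/

section Transvections

open Relation
open scoped commutatorElement

variable {n R F : Type*} [Fintype n] [DecidableEq n] [CommRing R] [Field F]

theorem commutatorElement_transvection {i j k : n} (hij : i ≠ j) (hjk : j ≠ k) (hik : i ≠ k)
    (a b : R) :
    ⁅SpecialLinearGroup.transvection hij a, SpecialLinearGroup.transvection hjk b⁆ =
      SpecialLinearGroup.transvection hik (a * b) := by
  rw [commutatorElement_def, SpecialLinearGroup.transvection_inv,
    SpecialLinearGroup.transvection_inv]
  apply Subtype.ext
  simp only [Matrix.SpecialLinearGroup.coe_mul, SpecialLinearGroup.transvection_coe, mul_add,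
    mul_one, add_mul, one_mul, single_mul_single_same, ← single_neg, mul_neg, ne_eq, hij.symm,
    hik.symm, hjk.symm, not_false_eq_true, single_mul_single_of_ne, add_zero, neg_mul]
  abel

theorem transvection_pow {i j : n} (hij : i ≠ j) (c : R) (k : ℕ) :
    SpecialLinearGroup.transvection hij c ^ k =
      SpecialLinearGroup.transvection hij (k * c) := by
  induction k with
  | zero => simp
  | succ k ih =>
    rw [pow_succ, ih, ← SpecialLinearGroup.transvection_add, Nat.cast_succ, add_one_mul]

theorem transvection_mem_of_reflTransGen {H : Subgroup (SpecialLinearGroup n R)}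
    {r : n → n → Prop}
    (hr : ∀ ⦃i j⦄ (hij : i ≠ j), r i j → ∀ c, SpecialLinearGroup.transvection hij c ∈ H)
    {i j : n} (hpath : ReflTransGen r i j) (hij : i ≠ j) (c : R) :
    SpecialLinearGroup.transvection hij c ∈ H := by
  induction hpath generalizing c with
  | refl => exact absurd rfl hij
  | @tail j k _ hjk ih =>
    obtain rfl | hne_jk := eq_or_ne j k
    · exact ih hij c
    obtain rfl | hne_ij := eq_or_ne i j
    · exact hr hij hjk c
    rw [← mul_one c, ← commutatorElement_transvection hne_ij hne_jk]
    exact H.commutator_le_self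
      (Subgroup.commutator_mem_commutator (ih hne_ij c) (hr hne_jk hjk 1))

theorem diag2n_eq_mul_transvection {i j : n} (hij : i ≠ j) {a : F} (ha : a ≠ 0) :
    SpecialLinearGroup.diag2n hij a ha =
      SpecialLinearGroup.transvection hij a * SpecialLinearGroup.transvection hij.symm (-a⁻¹) *
      SpecialLinearGroup.transvection hij a * SpecialLinearGroup.transvection hij (-1) *
      SpecialLinearGroup.transvection hij.symm 1 * SpecialLinearGroup.transvection hij (-1) := by
  have hdiag : (SpecialLinearGroup.diag2n hij a ha : Matrix n n F) =
      1 + single i i (a - 1) + single j j (a⁻¹ - 1) := by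
    ext k l
    simp only [SpecialLinearGroup.diag2n_coe, diagonal_apply, Matrix.add_apply, one_apply,
      single_apply]
    grind
  apply Subtype.ext
  rw [hdiag]
  simp only [sub_eq_add_neg, single_add, ← single_neg, Matrix.SpecialLinearGroup.coe_mul,
    SpecialLinearGroup.transvection_coe, mul_add, mul_one, mul_neg, add_mul, one_mul,
    single_mul_single_same, ne_eq, ha, not_false_eq_true, mul_inv_cancel₀, hij, hij.symm,
    single_mul_single_of_ne, add_zero, neg_mul, inv_mul_cancel₀, neg_zero]
  abel

theorem eq_top_of_transvection_mem {H : Subgroup (SpecialLinearGroup n F)}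
    (hH : ∀ ⦃i j⦄ (hij : i ≠ j) (c : F), SpecialLinearGroup.transvection hij c ∈ H) :
    H = ⊤ := by
  cases subsingleton_or_nontrivial n
  · exact Subsingleton.elim _ _
  refine eq_top_iff.2 fun g _ ↦ SpecialLinearGroup.diagonal_transvection_induction' (· ∈ H) g
    (fun i j hij c hc ↦ ?_) hH (fun _ _ ↦ mul_mem)
  rw [diag2n_eq_mul_transvection]
  apply_rules [mul_mem, hH]

variable {p : ℕ} [Fact p.Prime]

theorem transvection_mem_of_ne_zero {H : Subgroup (SpecialLinearGroup n (ZMod p))} {i j : n}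
    {hij : i ≠ j} {c : ZMod p} (hc : c ≠ 0) (hmem : SpecialLinearGroup.transvection hij c ∈ H)
    (d : ZMod p) : SpecialLinearGroup.transvection hij d ∈ H := by
  have hd : ((d / c).val : ZMod p) * c = d := by rw [ZMod.natCast_zmod_val, div_mul_cancel₀ d hc]
  rw [← hd, ← transvection_pow]
  exact pow_mem hmem _

theorem eq_top_of_transvection_mem_of_reflTransGen
    {H : Subgroup (SpecialLinearGroup n (ZMod p))} {r : n → n → Prop}
    (hconn : ∀ i j, ReflTransGen r i j)
    (hr : ∀ ⦃i j⦄ (hij : i ≠ j), r i j →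
      ∃ c ≠ 0, SpecialLinearGroup.transvection hij c ∈ H) :
    H = ⊤ :=
  eq_top_of_transvection_mem fun i j ↦
    transvection_mem_of_reflTransGen (fun _ _ hij hrij ↦
      let ⟨_, hc, hmem⟩ := hr hij hrij
      transvection_mem_of_ne_zero hc hmem) (hconn i j)

end Transvections

theorem eq_top_of_range_toGL_le {n R : Type*} [Fintype n] [DecidableEq n] [CommRing R]
    {H : Subgroup (GL n R)} (hSL : SpecialLinearGroup.toGL.range ≤ H)
    (hdet : H.map GeneralLinearGroup.det = ⊤) : H = ⊤ := by
  have hker : (GeneralLinearGroup.det : GL n R →* Rˣ).ker ≤ H := fun g hg ↦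
    hSL ⟨⟨g, congrArg Units.val hg⟩, Units.ext rfl⟩
  rw [← Subgroup.comap_map_eq_self hker, hdet, Subgroup.comap_top]

section Reflections

/-- The simple reflection `σ_j` modulo `3`; it is its own inverse. -/
def simpleReflection (j : Fin 3) : GL (Fin 3) (ZMod 3) where
  val := reflMatrix j
  inv := reflMatrix j
  val_inv := by decide +revert
  inv_val := by decide +revert

local notation "σ" => simpleReflection

/-- The Weyl group modulo `3`: the group generated by the simple reflections. -/
def reflectionGroup : Subgroup (GL (Fin 3) (ZMod 3)) :=
  Subgroup.closure (Set.range simpleReflection)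

theorem simpleReflection_mem (j : Fin 3) : σ j ∈ reflectionGroup :=
  Subgroup.subset_closure ⟨j, rfl⟩

theorem det_simpleReflection (j : Fin 3) : GeneralLinearGroup.det (σ j) = -1 := by
  decide +revert

/-- The conjugate of `σ 1` that changes the sign of the last coordinate. The conjugating word
carries the root of `σ 1`, the column `1` of `A`, to the last basis vector modulo `3`. -/
def signChange : GL (Fin 3) (ZMod 3) :=
  (σ 1 * σ 2 * σ 1 * σ 0) * σ 1 * (σ 1 * σ 2 * σ 1 * σ 0)⁻¹

theorem coe_signChange :
    (signChange : Matrix (Fin 3) (Fin 3) (ZMod 3)) = diagonal ![1, 1, -1] := by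
  decide

theorem signChange_mem : signChange ∈ reflectionGroup := by
  have hword : σ 1 * σ 2 * σ 1 * σ 0 ∈ reflectionGroup :=
    mul_mem (mul_mem (mul_mem (simpleReflection_mem 1) (simpleReflection_mem 2))
      (simpleReflection_mem 1)) (simpleReflection_mem 0)
  exact mul_mem (mul_mem hword (simpleReflection_mem 1)) (inv_mem hword)

theorem coe_sq_simpleReflection_one_mul_zero :
    (((σ 1 * σ 0) ^ 2 : GL (Fin 3) (ZMod 3)) : Matrix (Fin 3) (Fin 3) (ZMod 3)) =
      !![1, 1, 0; 0, 1, 0; 0, -1, 1] := by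
  decide

theorem coe_sq_simpleReflection_zero_mul_two :
    (((σ 0 * σ 2) ^ 2 : GL (Fin 3) (ZMod 3)) : Matrix (Fin 3) (Fin 3) (ZMod 3)) =
      !![1, 0, 0; -1, 1, 0; -1, 0, 1] := by
  decide

theorem coe_sq_simpleReflection_two_mul_zero :
    (((σ 2 * σ 0) ^ 2 : GL (Fin 3) (ZMod 3)) : Matrix (Fin 3) (Fin 3) (ZMod 3)) =
      !![1, 0, 0; 1, 1, 0; 1, 0, 1] := by
  decide

-- Conjugation by `signChange` flips the `(2, 1)` entry of `(σ 1 * σ 0) ^ 2`, which then cancels.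
theorem toGL_transvection_zero_one :
    SpecialLinearGroup.toGL (SpecialLinearGroup.transvection (by decide : (0 : Fin 3) ≠ 1) (-1)) =
      (σ 1 * σ 0) ^ 2 * (signChange * (σ 1 * σ 0) ^ 2 * signChange) := by
  apply Units.ext
  rw [Units.val_mul, Units.val_mul, Units.val_mul, coe_sq_simpleReflection_one_mul_zero,
    coe_signChange]
  decide

theorem toGL_transvection_one_two :
    SpecialLinearGroup.toGL (SpecialLinearGroup.transvection (by decide : (1 : Fin 3) ≠ 2) 1) =
      signChange * σ 2 := by
  apply Units.ext
  rw [Units.val_mul, coe_signChange]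
  decide

-- The two squares are inverse to each other, and conjugation by `signChange` only flips the
-- `(2, 0)` entry of the second, so that here the `(1, 0)` entries cancel.
theorem toGL_transvection_two_zero :
    SpecialLinearGroup.toGL (SpecialLinearGroup.transvection (by decide : (2 : Fin 3) ≠ 0) (-1)) =
      (σ 2 * σ 0) ^ 2 * (signChange * (σ 0 * σ 2) ^ 2 * signChange) := by
  apply Units.ext
  rw [Units.val_mul, Units.val_mul, Units.val_mul, coe_sq_simpleReflection_zero_mul_two,
    coe_sq_simpleReflection_two_mul_zero, coe_signChange]
  decide

theorem exists_transvection_add_one_mem (i : Fin 3) (hi : i ≠ i + 1) :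
    ∃ c ≠ 0, SpecialLinearGroup.transvection hi c ∈
      reflectionGroup.comap SpecialLinearGroup.toGL := by
  have sq_mem (j k : Fin 3) : (σ j * σ k) ^ 2 ∈ reflectionGroup :=
    pow_mem (mul_mem (simpleReflection_mem j) (simpleReflection_mem k)) 2
  have conj_mem {g} (hg : g ∈ reflectionGroup) : signChange * g * signChange ∈ reflectionGroup :=
    mul_mem (mul_mem signChange_mem hg) signChange_mem
  fin_cases i
  · exact ⟨-1, by decide, Subgroup.mem_comap.2 <|
      toGL_transvection_zero_one ▸ mul_mem (sq_mem 1 0) (conj_mem (sq_mem 1 0))⟩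
  · exact ⟨1, by decide, Subgroup.mem_comap.2 <|
      toGL_transvection_one_two ▸ mul_mem signChange_mem (simpleReflection_mem 2)⟩
  · exact ⟨-1, by decide, Subgroup.mem_comap.2 <|
      toGL_transvection_two_zero ▸ mul_mem (sq_mem 2 0) (conj_mem (sq_mem 0 2))⟩

theorem reflTransGen_add_one (i j : Fin 3) :
    Relation.ReflTransGen (fun k l : Fin 3 ↦ l = k + 1) i j := by
  have hj : j = i ∨ j = i + 1 ∨ j = i + 1 + 1 := by decide +revert
  obtain rfl | rfl | rfl := hj
  · exact .refl
  · exact .single rfl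
  · exact .tail (.single rfl) rfl

theorem range_toGL_le_reflectionGroup :
    SpecialLinearGroup.toGL.range ≤ reflectionGroup := by
  have hcomap : reflectionGroup.comap SpecialLinearGroup.toGL = ⊤ := by
    refine eq_top_of_transvection_mem_of_reflTransGen reflTransGen_add_one ?_
    rintro i _ hi rfl
    exact exists_transvection_add_one_mem i hi
  rw [MonoidHom.range_eq_map, Subgroup.map_le_iff_le_comap, hcomap]

theorem map_det_reflectionGroup : reflectionGroup.map GeneralLinearGroup.det = ⊤ := by
  have hunits : ∀ u : (ZMod 3)ˣ, u = 1 ∨ u = -1 := fun u ↦ by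
    have hval : ∀ x : ZMod 3, x ≠ 0 → x = 1 ∨ x = -1 := by decide
    exact (hval u u.ne_zero).imp Units.ext Units.ext
  refine eq_top_iff.2 fun u _ ↦ ?_
  obtain rfl | rfl := hunits u
  · exact one_mem _
  · exact ⟨σ 0, simpleReflection_mem 0, det_simpleReflection 0⟩

end Reflections

/-- For the stated Cartan matrix, the matrices `M₁, M₂, M₃` of the simple
reflections are invertible over `𝔽₃` and generate all of `GL(3, 𝔽₃)`. -/
theorem reflections_generate_GL3_F3 :
    ∃ u : Fin 3 → Matrix.GeneralLinearGroup (Fin 3) (ZMod 3),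
      (∀ j, ((u j : Matrix (Fin 3) (Fin 3) (ZMod 3))) = reflMatrix j) ∧
      Subgroup.closure (Set.range u) = ⊤ :=
  ⟨simpleReflection, fun _ ↦ rfl,
    eq_top_of_range_toGL_le range_toGL_le_reflectionGroup map_det_reflectionGroup⟩
end
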